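/- The function f defined by f(x₁,x₂,a) = 1/(x₁ (log x₁)^{3/2}) on {x₁ > 3, |x₂| < 1, e⁻¹ < a < e}, f = c₀ on R₀ = [−1,1]×[−1,1]×[e⁻¹,e], and f = 0 elsewhere (with c₀ chosen so that ∫_G f dρ = 0) has heat maximal function Mf in L¹(ρ), i.e. ‖Mf‖₁ < ∞. -/

import Mathlib

open MeasureTheory Real Filter Set
open scoped ENNReal

noncomputable section

/-- The group `G = ℝ² ⋊ ℝ⁺`, realized as triples `(x₁, x₂, a)` (only `a > 0` is relevant). -/
abbrev G : Type := ℝ × ℝ × ℝ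

/-- Group product `(x₁,x₂,a)·(x₁',x₂',a') = (x₁+a x₁', x₂+a x₂', a a')`. -/
def gMul (x y : G) : G := (x.1 + x.2.2 * y.1, x.2.1 + x.2.2 * y.2.1, x.2.2 * y.2.2)

/-- Group inverse `(x₁,x₂,a)⁻¹ = (−x₁/a, −x₂/a, 1/a)`. -/
def gInv (x : G) : G := (-x.1 / x.2.2, -x.2.1 / x.2.2, 1 / x.2.2)

/-- The identity `e = (0,0,1)`. -/
def gE : G := (0, 0, 1)

/-- The right Haar measure `dρ = a⁻¹ dx₁ dx₂ da` (supported where `a > 0`). -/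
def ρG : Measure G :=
  (volume : Measure G).withDensity fun x => ENNReal.ofReal (if 0 < x.2.2 then x.2.2⁻¹ else 0)

/-- The modular function `δ(x₁,x₂,a) = a⁻²`. -/
def deltaG (x : G) : ℝ := (x.2.2 ^ 2)⁻¹

/-- `|x| = √(x₁² + x₂²)`. -/
def normG (x : G) : ℝ := Real.sqrt (x.1 ^ 2 + x.2.1 ^ 2)

/-- `cosh r(x) = (a + a⁻¹ + a⁻¹|x|²)/2`. -/
def coshArg (x : G) : ℝ := (x.2.2 + x.2.2⁻¹ + x.2.2⁻¹ * (x.1 ^ 2 + x.2.1 ^ 2)) / 2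

/-- `r(x) ≥ 0` is determined by `cosh r(x) = coshArg x`; explicitly `r = arcosh (coshArg x)`. -/
def rG (x : G) : ℝ := Real.log (coshArg x + Real.sqrt (coshArg x ^ 2 - 1))

/-- The left-invariant distance `d(x,y) = r(x⁻¹y)`. -/
def dG (x y : G) : ℝ := rG (gMul (gInv x) y)

/-- The heat kernel
`p_t(x) = (8π^{3/2})⁻¹ δ(x)^{1/2} (r(x)/sinh r(x)) t^{−3/2} exp(−r(x)²/(4t))`,
with `r/sinh r := 1` at `x = e`. -/
def heatK (t : ℝ) (x : G) : ℝ :=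
  (8 * Real.pi ^ ((3 : ℝ)/2))⁻¹ * Real.sqrt (deltaG x) *
    (if rG x = 0 then 1 else rG x / Real.sinh (rG x)) *
    t ^ (-(3 : ℝ)/2) * Real.exp (-(rG x ^ 2) / (4 * t))

/-- Convolution `f ∗ p_t(x) = ∫ f(xy⁻¹) p_t(y) dρ(y)`. -/
def convHeat (f : G → ℝ) (t : ℝ) (x : G) : ℝ := ∫ y, f (gMul x (gInv y)) * heatK t y ∂ρG

/-- The heat maximal operator `Mf(x) = sup_{t>0} |f ∗ p_t(x)|` (valued in `ℝ≥0∞`). -/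
def maxHeat (f : G → ℝ) (x : G) : ℝ≥0∞ :=
  ⨆ (t : ℝ) (_ : 0 < t), ENNReal.ofReal |convHeat f t x|

/-- Calderón–Zygmund sets. -/
def IsCZ (R : Set G) : Prop :=
  ∃ c : G, ∃ L r : ℝ, 0 < c.2.2 ∧ 0 < L ∧ 0 < r ∧
    R = Set.Icc (c.1 - L/2) (c.1 + L/2) ×ˢ
        (Set.Icc (c.2.1 - L/2) (c.2.1 + L/2) ×ˢ
         Set.Icc (c.2.2 * Real.exp (-r)) (c.2.2 * Real.exp r)) ∧
    (r < 1 → Real.exp 2 * c.2.2 * r ≤ L ∧ L < Real.exp 8 * c.2.2 * r) ∧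
    (1 ≤ r → c.2.2 * Real.exp (2*r) ≤ L ∧ L < c.2.2 * Real.exp (8*r))

/-- Atoms: `A ∈ L¹(ρ)` supported in a Calderón–Zygmund set `R`, with
`‖A‖_∞ ≤ ρ(R)⁻¹` and `∫ A dρ = 0`. -/
def IsAtomG (A : G → ℝ) : Prop :=
  Integrable A ρG ∧
  ∃ R : Set G, IsCZ R ∧ (∀ x ∉ R, A x = 0) ∧
    eLpNorm A ⊤ ρG ≤ (ρG R)⁻¹ ∧
    ∫ x, A x ∂ρG = 0

/-- `f = Σ_j lam_j A_j` with atoms `A_j`, `Σ_j |lam_j| < ∞`, converging in `L¹(ρ)`. -/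
def IsH1Decomp (f : G → ℝ) (lam : ℕ → ℝ) (A : ℕ → G → ℝ) : Prop :=
  (∀ j, IsAtomG (A j)) ∧ Summable (fun j => |lam j|) ∧
  Tendsto (fun N => eLpNorm (fun x => f x - ∑ j ∈ Finset.range N, lam j * A j x) 1 ρG)
    atTop (nhds 0)

/-- The Hardy space `H¹`. -/
def MemH1 (f : G → ℝ) : Prop :=
  Integrable f ρG ∧ ∃ lam A, IsH1Decomp f lam A

/-- `‖f‖_{H¹} = inf Σ_j |lam_j|` over all atomic decompositions. -/
def H1norm (f : G → ℝ) : ℝ :=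
  sInf {s | ∃ lam A, IsH1Decomp f lam A ∧ s = ∑' j, |lam j|}

/-- The left-invariant vector field `X₀ = a ∂_a`. -/
def X0 (f : G → ℝ) (x : G) : ℝ := x.2.2 * deriv (fun s => f (x.1, x.2.1, s)) x.2.2

/-- The left-invariant vector field `X₁ = a ∂_{x₁}`. -/
def X1 (f : G → ℝ) (x : G) : ℝ := x.2.2 * deriv (fun s => f (s, x.2.1, x.2.2)) x.1

/-- The left-invariant vector field `X₂ = a ∂_{x₂}`. -/
def X2 (f : G → ℝ) (x : G) : ℝ := x.2.2 * deriv (fun s => f (x.1, s, x.2.2)) x.2.1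

/-- `‖∇p_t(x)‖`, the Euclidean norm of `(X₀p_t, X₁p_t, X₂p_t)` at `x`. -/
def gradHeatNorm (t : ℝ) (x : G) : ℝ :=
  Real.sqrt (X0 (heatK t) x ^ 2 + X1 (heatK t) x ^ 2 + X2 (heatK t) x ^ 2)

/-- The Poisson kernel `q_t(x) = π⁻² δ(x)^{1/2} (r(x)/sinh r(x)) · t/(t²+r(x)²)²`. -/
def poissonK (t : ℝ) (x : G) : ℝ :=
  (Real.pi ^ 2)⁻¹ * Real.sqrt (deltaG x) *
    (if rG x = 0 then 1 else rG x / Real.sinh (rG x)) *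
    (t / (t ^ 2 + rG x ^ 2) ^ 2)

/-- Convolution `f ∗ q_t(x) = ∫ f(xy⁻¹) q_t(y) dρ(y)`. -/
def convPoisson (f : G → ℝ) (t : ℝ) (x : G) : ℝ := ∫ y, f (gMul x (gInv y)) * poissonK t y ∂ρG

/-- The Poisson maximal operator `M̃f(x) = sup_{t>0} |f ∗ q_t(x)|`. -/
def maxPoisson (f : G → ℝ) (x : G) : ℝ≥0∞ :=
  ⨆ (t : ℝ) (_ : 0 < t), ENNReal.ofReal |convPoisson f t x|

/-- `G_{r₁}(x) = sup_{z ∈ B(x,r₁/2)} sup_{t>0} ‖∇p_t(z)‖`. -/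
def Gsup (r1 : ℝ) (x : G) : ℝ≥0∞ :=
  ⨆ (z : G) (_ : 0 < z.2.2 ∧ dG x z < r1 / 2) (t : ℝ) (_ : 0 < t),
    ENNReal.ofReal (gradHeatNorm t z)

/-- `R₀ = [−1,1]×[−1,1]×[e⁻¹,e]`. -/
def R0set : Set G :=
  Set.Icc (-1 : ℝ) 1 ×ˢ (Set.Icc (-1 : ℝ) 1 ×ˢ Set.Icc (Real.exp (-1)) (Real.exp 1))

/-- `R_L = [L−1,L+1]×[−1,1]×[e⁻¹,e]`. -/
def RLset (L : ℝ) : Set G :=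
  Set.Icc (L - 1) (L + 1) ×ˢ (Set.Icc (-1 : ℝ) 1 ×ˢ Set.Icc (Real.exp (-1)) (Real.exp 1))

/-- `f_L = χ_{R_L} − χ_{R₀}`. -/
def fL (L : ℝ) : G → ℝ := fun x =>
  (RLset L).indicator (fun _ => (1 : ℝ)) x - R0set.indicator (fun _ => (1 : ℝ)) x

/-- The mean of `g` over `R` with respect to `ρ`. -/
def czMean (g : G → ℝ) (R : Set G) : ℝ := (∫ x in R, g x ∂ρG) / (ρG R).toReal

/-- `‖g‖_{BMO} = sup_R ρ(R)⁻¹ ∫_R |g − g_R| dρ` over Calderón–Zygmund sets `R`. -/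
def czBMO (g : G → ℝ) : ℝ≥0∞ :=
  ⨆ (R : Set G) (_ : IsCZ R),
    (ρG R)⁻¹ * ∫⁻ x in R, ENNReal.ofReal |g x - czMean g R| ∂ρG

/-- `‖h‖_{BMO(ℝ)} = sup_Q |Q|⁻¹ ∫_Q |h − h_Q|` over bounded intervals `Q ⊂ ℝ`. -/
def lineBMO (h : ℝ → ℝ) : ℝ≥0∞ :=
  ⨆ (a : ℝ) (b : ℝ) (_ : a < b),
    (ENNReal.ofReal (b - a))⁻¹ *
      ∫⁻ s in Set.Icc a b, ENNReal.ofReal |h s - (∫ u in Set.Icc a b, h u) / (b - a)|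

/-- `2R₀ = [−2,2]×[−2,2]×[e⁻²,e²]`. -/
def twoR0set : Set G :=
  Set.Icc (-2 : ℝ) 2 ×ˢ (Set.Icc (-2 : ℝ) 2 ×ˢ Set.Icc (Real.exp (-2)) (Real.exp 2))

/-- The set `{x₁ > 3, |x₂| < 1, e⁻¹ < a < e}`. -/
def domSpecial : Set G :=
  {x : G | 3 < x.1 ∧ |x.2.1| < 1 ∧ Real.exp (-1) < x.2.2 ∧ x.2.2 < Real.exp 1}

/-- The function equal to `1/(x₁ (log x₁)^{3/2})` on `{x₁ > 3, |x₂| < 1, e⁻¹ < a < e}`,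
to `c₀` on `R₀`, and `0` elsewhere. -/
def fSpecial (c0 : ℝ) : G → ℝ := fun x =>
  domSpecial.indicator (fun y => (y.1 * Real.log y.1 ^ ((3 : ℝ)/2))⁻¹) x
    + R0set.indicator (fun _ => c0) x

def gHeat (t r : ℝ) : ℝ := r * t ^ (-(3 : ℝ)/2) * Real.exp (-(r ^ 2) / (4 * t))

theorem rpow_neg_three_half (t : ℝ) (ht : 0 < t) : t ^ (-(3 : ℝ)/2) = (Real.sqrt t ^ 3)⁻¹ := by
  rw [Real.sqrt_eq_rpow, ← Real.rpow_natCast, ← Real.rpow_mul ht.le, ← Real.rpow_neg ht.le]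
  norm_num

theorem cube_exp_le (u : ℝ) (hu : 0 ≤ u) : u ^ 3 * Real.exp (-(u^2/4)) ≤ 100 := by
  have h := Real.pow_div_factorial_le_exp (u^2/4) (by positivity) 2
  have h0 := Real.one_le_exp (x := u^2/4) (by positivity)
  rw [Real.exp_neg, ← div_eq_mul_inv, div_le_iff₀ (Real.exp_pos _)]
  norm_num [Nat.factorial] at h
  have : u^3 ≤ 1 + u^4 := by nlinarith [sq_nonneg (u^2 - u), sq_nonneg (u-1), sq_nonneg (u^2-1), sq_nonneg u]
  nlinarith

theorem five_exp_le (u : ℝ) (hu : 0 ≤ u) : u ^ 5 * Real.exp (-(u^2/4)) ≤ 1000 := by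
  have h := Real.pow_div_factorial_le_exp (u^2/4) (by positivity) 3
  have h0 := Real.one_le_exp (x := u^2/4) (by positivity)
  rw [Real.exp_neg, ← div_eq_mul_inv, div_le_iff₀ (Real.exp_pos _)]
  norm_num [Nat.factorial] at h
  have : u^5 ≤ 1 + u^6 := by
    rcases le_total u 1 with h1 | h1
    · have := pow_le_one₀ hu h1 (n := 5); nlinarith [pow_nonneg hu 6]
    · have := pow_le_pow_right₀ h1 (show 5 ≤ 6 by norm_num); linarith
  nlinarith

theorem exp_sub_aux (t r : ℝ) (ht : 0 < t) :
    -(r ^ 2) / (4 * t) = -((r / Real.sqrt t)^2/4) := by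
  rw [div_pow, Real.sq_sqrt ht.le]; field_simp

theorem gHeat_nonneg (t r : ℝ) (ht : 0 < t) (hr : 0 ≤ r) : 0 ≤ gHeat t r := by
  unfold gHeat; positivity

theorem gHeat_le (t r : ℝ) (ht : 0 < t) (hr : 0 < r) : gHeat t r ≤ 100 * (r ^ 2)⁻¹ := by
  unfold gHeat
  have hs : 0 < Real.sqrt t := Real.sqrt_pos.2 ht
  rw [rpow_neg_three_half t ht, exp_sub_aux t r ht]
  have h := cube_exp_le (r / Real.sqrt t) (by positivity)
  calc _ = (r^2)⁻¹ * ((r / √t) ^ 3 * rexp (-((r / √t) ^ 2 / 4))) := by field_simp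
    _ ≤ (r^2)⁻¹ * 100 := by gcongr
    _ = _ := by ring

theorem gHeat_hasDerivAt (t r : ℝ) (ht : 0 < t) : HasDerivAt (gHeat t)
    (t ^ (-(3 : ℝ)/2) * Real.exp (-(r ^ 2) / (4 * t)) * (1 - r^2/(2*t))) r := by
  unfold gHeat
  have h1 : HasDerivAt (fun r : ℝ => -(r^2)/(4*t)) (-(2*r)/(4*t)) r := by
    simpa using (((hasDerivAt_pow 2 r).neg).div_const (4*t))
  have h2 := ((hasDerivAt_id r).mul_const (t ^ (-(3 : ℝ)/2))).mul h1.exp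
  refine h2.congr_deriv ?_
  simp only [id]
  field_simp
  ring

theorem gHeat_deriv_le (t r : ℝ) (ht : 0 < t) (hr : 0 < r) :
    |t ^ (-(3 : ℝ)/2) * Real.exp (-(r ^ 2) / (4 * t)) * (1 - r^2/(2*t))| ≤ 1000 * (r ^ 3)⁻¹ := by
  have hs : 0 < Real.sqrt t := Real.sqrt_pos.2 ht
  rw [rpow_neg_three_half t ht, exp_sub_aux t r ht]
  have e : r^2/(2*t) = (r / √t)^2/2 := by rw [div_pow, Real.sq_sqrt ht.le]; field_simp
  rw [e]
  have h := cube_exp_le (r / Real.sqrt t) (by positivity)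
  have h5 := five_exp_le (r / Real.sqrt t) (by positivity)
  have key : (√t ^ 3)⁻¹ * rexp (-((r / √t) ^ 2 / 4)) * (1 - (r / √t) ^ 2 / 2)
    = (r^3)⁻¹ * ((r / √t) ^ 3 * rexp (-((r / √t) ^ 2 / 4)) - (r / √t) ^ 5 * rexp (-((r / √t) ^ 2 / 4))/2) := by
    field_simp
  rw [key, abs_mul, abs_of_pos (by positivity : 0 < (r^3)⁻¹), mul_comm]
  gcongr
  rw [abs_le]
  have a1 : 0 ≤ (r / √t) ^ 3 * rexp (-((r / √t) ^ 2 / 4)) := by positivity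
  have a2 : 0 ≤ (r / √t) ^ 5 * rexp (-((r / √t) ^ 2 / 4)) := by positivity
  constructor <;> linarith

theorem gHeat_lip_aux (t r s : ℝ) (ht : 0 < t) (hr : 0 < r) (hrs : r ≤ s) :
    |gHeat t s - gHeat t r| ≤ 1000 * (r^3)⁻¹ * (s - r) := by
  have h := Convex.norm_image_sub_le_of_norm_hasDerivWithin_le (f := gHeat t)
    (f' := fun r => t ^ (-(3 : ℝ)/2) * Real.exp (-(r ^ 2) / (4 * t)) * (1 - r^2/(2*t)))
    (s := Icc r s) (x := r) (y := s) (C := 1000 * (r^3)⁻¹)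
    (fun x hx => (gHeat_hasDerivAt t x ht).hasDerivWithinAt)
    (fun x hx => by
      have hx0 : 0 < x := lt_of_lt_of_le hr hx.1
      rw [Real.norm_eq_abs]
      refine (gHeat_deriv_le t x ht hx0).trans ?_
      gcongr
      exact hx.1)
    (convex_Icc r s) ⟨le_rfl, hrs⟩ ⟨hrs, le_rfl⟩
  rw [Real.norm_eq_abs, Real.norm_eq_abs, abs_of_nonneg (sub_nonneg.2 hrs)] at h
  exact h

theorem gHeat_lip (t r s : ℝ) (ht : 0 < t) (hr : 0 < r) (hs : 0 < s) :
    |gHeat t r - gHeat t s| ≤ 1000 * ((r^3)⁻¹ + (s^3)⁻¹) * |r - s| := by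
  have p1 : 0 < (r^3)⁻¹ := by positivity
  have p2 : 0 < (s^3)⁻¹ := by positivity
  rcases le_total r s with h | h
  · rw [abs_sub_comm, abs_sub_comm r s, abs_of_nonneg (sub_nonneg.2 h)]
    refine (gHeat_lip_aux t r s ht hr h).trans ?_
    have := sub_nonneg.2 h
    gcongr; linarith
  · rw [abs_of_nonneg (sub_nonneg.2 h)]
    refine (gHeat_lip_aux t s r ht hs h).trans ?_
    have := sub_nonneg.2 h
    gcongr; linarith

def QQ (x y : G) : ℝ := x.2.2^2 + y.2.2^2 + ((x.1-y.1)^2+(x.2.1-y.2.1)^2)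
def rr (x y : G) : ℝ := rG (gMul (gInv y) x)
def KK (t : ℝ) (x y : G) : ℝ := heatK t (gMul (gInv y) x) * deltaG y
def kap : ℝ := (8 * Real.pi ^ ((3 : ℝ)/2))⁻¹

theorem kap_pos : 0 < kap := by unfold kap; positivity

theorem coshArg_eq (x y : G) (hx : 0 < x.2.2) (hy : 0 < y.2.2) :
    coshArg (gMul (gInv y) x) = QQ x y / (2 * (x.2.2 * y.2.2)) := by
  unfold coshArg gMul gInv QQ
  simp only
  field_simp
  ring

theorem QQ_ge (x y : G) (hx : 0 < x.2.2) (hy : 0 < y.2.2) :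
    1 ≤ QQ x y / (2 * (x.2.2 * y.2.2)) := by
  rw [le_div_iff₀ (by positivity)]
  unfold QQ
  nlinarith [sq_nonneg (x.2.2 - y.2.2), sq_nonneg (x.1-y.1), sq_nonneg (x.2.1-y.2.1)]

theorem QQ_pos (x y : G) (hx : 0 < x.2.2) : 0 < QQ x y := by
  unfold QQ; positivity

theorem rr_eq (x y : G) (hx : 0 < x.2.2) (hy : 0 < y.2.2) :
    rr x y = Real.arcosh (QQ x y / (2 * (x.2.2 * y.2.2))) := by
  unfold rr rG; rw [coshArg_eq x y hx hy]; rfl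

theorem cosh_rr (x y : G) (hx : 0 < x.2.2) (hy : 0 < y.2.2) :
    Real.cosh (rr x y) = QQ x y / (2 * (x.2.2 * y.2.2)) := by
  rw [rr_eq x y hx hy, Real.cosh_arcosh (QQ_ge x y hx hy)]

theorem rr_nonneg (x y : G) (hx : 0 < x.2.2) (hy : 0 < y.2.2) : 0 ≤ rr x y := by
  rw [rr_eq x y hx hy]; exact Real.arcosh_nonneg (QQ_ge x y hx hy)

theorem delta_aux (x y : G) (hx : 0 < x.2.2) (hy : 0 < y.2.2) :
    Real.sqrt (deltaG (gMul (gInv y) x)) * deltaG y = (x.2.2 * y.2.2)⁻¹ := by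
  have : deltaG (gMul (gInv y) x) = (y.2.2 / x.2.2)^2 := by
    unfold deltaG gMul gInv; simp only; field_simp
  rw [this, Real.sqrt_sq (by positivity)]
  unfold deltaG; field_simp

theorem KK_eq (t : ℝ) (x y : G) (hx : 0 < x.2.2) (hy : 0 < y.2.2) (hr : 0 < rr x y) :
    KK t x y = kap * (x.2.2 * y.2.2 * Real.sinh (rr x y))⁻¹ * gHeat t (rr x y) := by
  unfold KK heatK
  rw [if_neg (show rG (gMul (gInv y) x) ≠ 0 from hr.ne')]
  change kap * _ * _ * _ * _ * _ = _
  rw [mul_inv, ← delta_aux x y hx hy]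
  unfold gHeat
  change _ * (rr x y / Real.sinh (rr x y)) * _ * Real.exp (-(rr x y)^2/_) * _ = _
  ring

theorem KK_nonneg (t : ℝ) (x y : G) (ht : 0 < t) (hx : 0 < x.2.2) (hy : 0 < y.2.2) : 0 ≤ KK t x y := by
  have hr := rr_nonneg x y hx hy
  unfold KK heatK deltaG
  have : 0 ≤ (if rG (gMul (gInv y) x) = 0 then (1:ℝ) else rG (gMul (gInv y) x) / Real.sinh (rG (gMul (gInv y) x))) := by
    split_ifs
    · norm_num
    · exact div_nonneg hr (Real.sinh_nonneg_iff.2 hr)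
  positivity

theorem KK_le (t : ℝ) (x y : G) (ht : 0 < t) (hx : 0 < x.2.2) (hy : 0 < y.2.2) :
    KK t x y ≤ kap * (x.2.2 * y.2.2)⁻¹ * t ^ (-(3 : ℝ)/2) * Real.exp (-(rr x y ^ 2) / (4 * t)) := by
  have hr := rr_nonneg x y hx hy
  have hk := kap_pos
  unfold KK heatK
  have : (if rG (gMul (gInv y) x) = 0 then (1:ℝ) else rG (gMul (gInv y) x) / Real.sinh (rG (gMul (gInv y) x))) ≤ 1 := by
    split_ifs with h
    · norm_num
    · have hp : 0 < rG (gMul (gInv y) x) := lt_of_le_of_ne hr (Ne.symm h)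
      rw [div_le_one (Real.sinh_pos_iff.2 hp)]
      exact Real.self_le_sinh_iff.2 hp.le
  rw [← delta_aux x y hx hy]
  change kap * √(deltaG (gMul (gInv y) x)) * _ * _ * Real.exp (-(rr x y)^2/_) * _ ≤ _
  have hd : 0 ≤ deltaG y := by unfold deltaG; positivity
  calc _ ≤ kap * √(deltaG (gMul (gInv y) x)) * 1 * t ^ (-(3 : ℝ)/2) * Real.exp (-(rr x y)^2/(4*t)) * deltaG y := by gcongr
    _ = _ := by ring

/-- the support strip -/
def SS : Set G := {y | |y.2.1| ≤ 1 ∧ Real.exp (-1) ≤ y.2.2 ∧ y.2.2 ≤ Real.exp 1}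
/-- local pairs -/
def Loc (x y : G) : Prop := Real.exp (-2) ≤ x.2.2 ∧ x.2.2 ≤ Real.exp 2 ∧ |x.2.1| ≤ 2 ∧ |x.1 - y.1| ≤ 1

theorem SS_pos {y : G} (hy : y ∈ SS) : 0 < y.2.2 := lt_of_lt_of_le (Real.exp_pos _) hy.2.1

theorem gE_SS : gE ∈ SS := by
  refine ⟨by simp [gE], ?_, ?_⟩ <;> simp [gE]

/-- lower bound for cosh r on nonlocal pairs -/
theorem cosh_nonloc : ∃ k : ℝ, 0 < k ∧ ∀ x y : G, 0 < x.2.2 → y ∈ SS → ¬ Loc x y →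
    1 + k ≤ QQ x y / (2 * (x.2.2 * y.2.2)) := by
  have e1 : (2:ℝ) < Real.exp 1 := by have := Real.exp_one_gt_d9; linarith
  have e2 : Real.exp (-1) * Real.exp 1 = 1 := by rw [← Real.exp_add]; simp
  have e3 : Real.exp (-2) = Real.exp (-1) * Real.exp (-1) := by rw [← Real.exp_add]; norm_num
  have e4 : Real.exp (2) = Real.exp (1) * Real.exp (1) := by rw [← Real.exp_add]; norm_num
  refine ⟨(2 * Real.exp 3)⁻¹, by positivity, ?_⟩
  have e5 : Real.exp 3 = Real.exp 1 * Real.exp 1 * Real.exp 1 := by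
    rw [← Real.exp_add, ← Real.exp_add]; norm_num
  rintro ⟨x1, x2, a⟩ ⟨y1, y2, b⟩ ha hy hl
  have hb := SS_pos hy
  obtain ⟨hy2, hb1, hb2⟩ := hy
  simp only [Loc, QQ] at *
  set E := Real.exp 1
  set F := Real.exp (-1)
  have hE : 0 < E := Real.exp_pos _
  have hF : 0 < F := Real.exp_pos _
  have hFE : F = E⁻¹ := by field_simp; linarith
  rw [le_div_iff₀ (by positivity)]
  rw [e3, e4] at hl
  have hk : (2 * rexp 3)⁻¹ ≤ 1/16 := by
    rw [e5, inv_le_comm₀ (by positivity) (by norm_num)]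
    have : 2*2*2 ≤ E*E*E := by gcongr
    norm_num; linarith
  have N0 := sq_nonneg (x1-y1)
  have N1 := sq_nonneg (x2-y2)
  have hab : 0 < a*b := by positivity
  by_cases hA : F*F ≤ a
  · by_cases hA' : a ≤ E*E
    · -- spatial
      have hN : 1 ≤ (x1-y1)^2 + (x2-y2)^2 := by
        by_cases hx2 : |x2| ≤ 2
        · have : ¬ |x1 - y1| ≤ 1 := fun h => hl ⟨hA, hA', hx2, h⟩
          push Not at this
          have := one_le_sq_iff_one_le_abs (x1-y1) |>.2 this.le
          linarith
        · push Not at hx2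
          have : 1 ≤ |x2 - y2| := by
            have := abs_sub_abs_le_abs_sub x2 y2; linarith
          have := one_le_sq_iff_one_le_abs (x2-y2) |>.2 this
          linarith
      have hab3 : a * b ≤ rexp 3 := by
        rw [e5]; gcongr
      have : (2 * rexp 3)⁻¹ * (2 * (a*b)) ≤ 1 := by
        rw [inv_mul_le_iff₀ (by positivity)]; linarith
      nlinarith [sq_nonneg (a-b)]
    · push Not at hA'
      have : 2 * b ≤ a := by nlinarith
      nlinarith
  · push Not at hA
    have : 2 * a ≤ b := by
      have : a ≤ F * F := hA.le
      have : 2 * F ≤ 1 := by nlinarith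
      nlinarith
    nlinarith

def w1 (a : ℝ) : ℝ := 1 + |Real.log a|
def w2 (z : ℝ × ℝ) : ℝ := 1 + Real.log (1 + ‖z‖^2)
def UU (z : ℝ × ℝ) : ℝ := (1 + ‖z‖^2)⁻¹ * w2 z ^ (-(9/8) : ℝ)
def zz (x y : G) : ℝ × ℝ := (x.1 - y.1, x.2.1 - y.2.1)

theorem w1_ge (a : ℝ) : 1 ≤ w1 a := by unfold w1; linarith [abs_nonneg (Real.log a)]
theorem w2_ge (z : ℝ × ℝ) : 1 ≤ w2 z := by
  unfold w2; linarith [Real.log_nonneg (x := 1 + ‖z‖^2) (by nlinarith [sq_nonneg ‖z‖])]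

theorem UU_nonneg (z) : 0 ≤ UU z := by
  have := w2_ge z
  unfold UU; positivity

theorem norm_sq_le (u v : ℝ) : ‖(u,v)‖^2 ≤ u^2 + v^2 := by
  rw [Prod.norm_def]
  simp only [Real.norm_eq_abs]
  rcases max_choice |u| |v| with h | h <;> rw [h, sq_abs] <;> nlinarith [sq_nonneg u, sq_nonneg v]

theorem QQ_lower (x y : G) (hy : y ∈ SS) :
    Real.exp (-2) * (1 + ‖zz x y‖^2) ≤ QQ x y := by
  have h := norm_sq_le (x.1 - y.1) (x.2.1 - y.2.1)
  have e3 : Real.exp (-2) = Real.exp (-1) * Real.exp (-1) := by rw [← Real.exp_add]; norm_num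
  have e4 : Real.exp (-2) ≤ 1 := by rw [Real.exp_le_one_iff]; norm_num
  have hb : Real.exp (-2) ≤ y.2.2^2 := by
    rw [e3, sq]; have := hy.2.1; have := SS_pos hy; gcongr
  have h2 : Real.exp (-2) * ‖zz x y‖^2 ≤ 1 * ‖zz x y‖^2 := by gcongr
  unfold QQ
  change ‖zz x y‖^2 ≤ _ at h
  nlinarith [sq_nonneg x.2.2]

theorem nonloc_bounds : ∃ c : ℝ, 0 < c ∧ ∀ x y : G, 0 < x.2.2 → y ∈ SS → ¬ Loc x y →
    c * w1 x.2.2 ≤ rr x y ∧ c * w2 (zz x y) ≤ rr x y ∧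
    c * QQ x y ≤ x.2.2 * y.2.2 * Real.sinh (rr x y) ∧ c * (1 + ‖zz x y‖^2) ≤ QQ x y := by
  obtain ⟨k, hk, H⟩ := cosh_nonloc
  set c0 := Real.arcosh (1 + k) with hc0
  have c0pos : 0 < c0 := Real.arcosh_pos (by linarith)
  set θ := Real.sqrt (1 - ((1+k)^2)⁻¹) with hθ
  have hθ2 : 0 < 1 - ((1+k)^2)⁻¹ := by
    have : ((1+k)^2)⁻¹ < 1 := inv_lt_one_of_one_lt₀ (by nlinarith)
    linarith
  have θpos : 0 < θ := Real.sqrt_pos.2 hθ2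
  set c := min (min (2 + 7/c0)⁻¹ (θ/2)) (Real.exp (-2)) with hc
  have cpos : 0 < c := by
    apply lt_min (lt_min _ _) (Real.exp_pos _) <;> positivity
  have hc1 : c ≤ (2 + 7/c0)⁻¹ := (min_le_left _ _).trans (min_le_left _ _)
  have hc2 : c ≤ θ/2 := (min_le_left _ _).trans (min_le_right _ _)
  have hc3 : c ≤ Real.exp (-2) := (min_le_right _ _)
  refine ⟨c, cpos, ?_⟩
  intro x y hx hy hl
  have hb := SS_pos hy
  have h1 := H x y hx hy hl
  have hr0 : c0 ≤ rr x y := by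
    rw [rr_eq x y hx hb, hc0, Real.arcosh_le_arcosh (by linarith) (by linarith)]; exact h1
  have hch := cosh_rr x y hx hb
  have hrpos : 0 < rr x y := lt_of_lt_of_le c0pos hr0
  have hQ := QQ_pos x y hx
  have hE : QQ x y / (2 * (x.2.2 * y.2.2)) ≤ Real.exp (rr x y) := by
    rw [← hch, Real.cosh_eq]
    have : Real.exp (-rr x y) ≤ Real.exp (rr x y) := Real.exp_le_exp.2 (by linarith)
    linarith
  have hlog : Real.log (QQ x y) - Real.log 2 - Real.log x.2.2 - Real.log y.2.2 ≤ rr x y := by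
    have := Real.log_le_log (by positivity) hE
    rw [Real.log_exp, Real.log_div (by positivity) (by positivity), Real.log_mul (by positivity) (by positivity),
      Real.log_mul (by positivity) (by positivity)] at this
    linarith
  have lb1 : Real.log y.2.2 ≤ 1 := by
    have := Real.log_le_log hb hy.2.2; rwa [Real.log_exp] at this
  have lb2 : -1 ≤ Real.log y.2.2 := by
    have := Real.log_le_log (Real.exp_pos _) hy.2.1; rwa [Real.log_exp] at this
  have l2 : Real.log 2 ≤ 1 := by have := Real.log_two_lt_d9; linarith
  have la : 2 * Real.log x.2.2 ≤ Real.log (QQ x y) := by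
    have : Real.log (x.2.2^2) ≤ Real.log (QQ x y) := by
      apply Real.log_le_log (by positivity); unfold QQ; nlinarith [sq_nonneg y.2.2, sq_nonneg (x.1-y.1), sq_nonneg (x.2.1-y.2.1)]
    rwa [Real.log_pow] at this
  have lb : 2 * Real.log y.2.2 ≤ Real.log (QQ x y) := by
    have : Real.log (y.2.2^2) ≤ Real.log (QQ x y) := by
      apply Real.log_le_log (by positivity); unfold QQ; nlinarith [sq_nonneg x.2.2, sq_nonneg (x.1-y.1), sq_nonneg (x.2.1-y.2.1)]
    rwa [Real.log_pow] at this
  have hql := QQ_lower x y hy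
  have lz : -2 + Real.log (1 + ‖zz x y‖^2) ≤ Real.log (QQ x y) := by
    have := Real.log_le_log (by positivity) hql
    rwa [Real.log_mul (by positivity) (by positivity), Real.log_exp] at this
  have hgen : ∀ w, w ≤ 2 * rr x y + 7 → c * w ≤ rr x y := by
    intro w hw
    rcases le_total w 0 with h | h
    · nlinarith
    calc c * w ≤ (2 + 7/c0)⁻¹ * (2 * rr x y + 7) := by gcongr
      _ ≤ rr x y := by
        rw [inv_mul_le_iff₀ (by positivity)]
        have : 7 ≤ 7 / c0 * rr x y := by
          rw [div_mul_eq_mul_div, le_div_iff₀ c0pos]; linarith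
        nlinarith
  refine ⟨hgen _ ?_, hgen _ ?_, ?_, ?_⟩
  · unfold w1
    rcases abs_cases (Real.log x.2.2) with ⟨h, _⟩ | ⟨h, _⟩ <;> rw [h] <;> linarith
  · unfold w2
    linarith
  · have hs : θ * Real.cosh (rr x y) ≤ Real.sinh (rr x y) := by
      have hs0 : 0 < Real.sinh (rr x y) := Real.sinh_pos_iff.2 hrpos
      have hc9 : 0 < Real.cosh (rr x y) := Real.cosh_pos _
      refine (sq_le_sq₀ (by positivity) hs0.le).1 ?_
      rw [mul_pow, hθ, Real.sq_sqrt hθ2.le, Real.sinh_sq]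
      have h2 : (1+k)^2 ≤ Real.cosh (rr x y)^2 := by rw [hch]; gcongr
      have h3 : 1 ≤ ((1+k)^2)⁻¹ * Real.cosh (rr x y)^2 := by
        rw [le_inv_mul_iff₀ (by positivity)]; linarith
      linarith
    calc c * QQ x y ≤ θ/2 * QQ x y := by gcongr
      _ = x.2.2 * y.2.2 * (θ * Real.cosh (rr x y)) := by rw [hch]; field_simp
      _ ≤ _ := by gcongr
  · calc _ ≤ Real.exp (-2) * (1 + ‖zz x y‖^2) := by gcongr
      _ ≤ _ := hql

theorem r_pow_aux (c r u v : ℝ) (hc : 0 < c) (hu : 1 ≤ u) (hv : 1 ≤ v) (h1 : c * u ≤ r) (h2 : c * v ≤ r) :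
    (r^2)⁻¹ ≤ (c^2)⁻¹ * (u ^ (-(9/8) : ℝ) * v ^ (-(7/8) : ℝ)) ∧
    (r^3)⁻¹ ≤ (c^3)⁻¹ * (u ^ (-(9/8) : ℝ) * v ^ (-(9/8) : ℝ)) := by
  have hr : 0 < r := lt_of_lt_of_le (by positivity) h1
  have hu0 : 0 < u := by linarith
  have hv0 : 0 < v := by linarith
  have A : ∀ p q : ℝ, 0 ≤ p → 0 ≤ q → c^(p+q) * (u^p * v^q) ≤ r^(p+q) := by
    intro p q hp hq
    calc c^(p+q) * (u^p * v^q) = (c*u)^p * (c*v)^q := by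
          rw [Real.rpow_add hc, Real.mul_rpow hc.le hu0.le, Real.mul_rpow hc.le hv0.le]; ring
      _ ≤ r^p * r^q := by gcongr
      _ = _ := by rw [Real.rpow_add hr]
  constructor
  · have := A (9/8) (7/8) (by norm_num) (by norm_num)
    norm_num at this
    rw [Real.rpow_neg hu0.le, Real.rpow_neg hv0.le, ← mul_inv, ← mul_inv]
    gcongr
  · have := A (9/8) (15/8) (by norm_num) (by norm_num)
    have e : (9/8 + 15/8 : ℝ) = (3:ℕ) := by norm_num
    rw [e, Real.rpow_natCast, Real.rpow_natCast] at this
    have h3 : v ^ (9/8:ℝ) ≤ v^(15/8:ℝ) := Real.rpow_le_rpow_of_exponent_le hv (by norm_num)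
    rw [Real.rpow_neg hu0.le, Real.rpow_neg hv0.le, ← mul_inv, ← mul_inv]
    refine inv_anti₀ (by positivity) (le_trans ?_ this)
    gcongr

theorem near_bound : ∃ C : ℝ, 0 < C ∧ ∀ (t : ℝ) (x y : G) (ℓ : ℝ), 0 < t → 0 < x.2.2 → y ∈ SS → ¬ Loc x y →
    1 ≤ ℓ → w2 (zz x y) ≤ 7 * ℓ →
    KK t x y ≤ C * (ℓ ^ (1/4 : ℝ) * w1 x.2.2 ^ (-(9/8) : ℝ) * UU (zz x y)) := by
  obtain ⟨c, hc, H⟩ := nonloc_bounds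
  have hk := kap_pos
  refine ⟨kap * ((c*c)⁻¹ * (100 * (c^2)⁻¹)) * (7 : ℝ)^(1/4:ℝ), by positivity, ?_⟩
  intro t x y ℓ ht hx hy hl hℓ hw
  obtain ⟨h1, h2, h3, h4⟩ := H x y hx hy hl
  have v1 := w1_ge x.2.2
  have v2 := w2_ge (zz x y)
  have hr : 0 < rr x y := lt_of_lt_of_le (by positivity) h1
  have hQ := QQ_pos x y hx
  rw [KK_eq t x y hx (SS_pos hy) hr]
  have hg := (gHeat_le t _ ht hr).trans (mul_le_mul_of_nonneg_left (r_pow_aux c _ _ _ hc v1 v2 h1 h2).1 (by norm_num))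
  have hD : (x.2.2 * y.2.2 * Real.sinh (rr x y))⁻¹ ≤ (c * c)⁻¹ * (1 + ‖zz x y‖^2)⁻¹ := by
    rw [← mul_inv]
    apply inv_anti₀ (by positivity)
    nlinarith
  have hw2 : w2 (zz x y) ^ (-(7/8) : ℝ) ≤ (7 : ℝ)^(1/4:ℝ) * ℓ ^ (1/4 : ℝ) * w2 (zz x y) ^ (-(9/8) : ℝ) := by
    rw [← Real.mul_rpow (by norm_num) (by linarith)]
    have e : (-(7/8) : ℝ) = 1/4 + -(9/8) := by norm_num
    rw [e, Real.rpow_add (by linarith)]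
    gcongr
  have hg0 := gHeat_nonneg t _ ht hr.le
  calc _ ≤ kap * ((c * c)⁻¹ * (1 + ‖zz x y‖^2)⁻¹) * (100 * ((c ^ 2)⁻¹ * (w1 x.2.2 ^ (-(9 / 8) : ℝ) *
      ((7 : ℝ)^(1/4:ℝ) * ℓ ^ (1/4 : ℝ) * w2 (zz x y) ^ (-(9/8) : ℝ))))) := by
        refine mul_le_mul (mul_le_mul_of_nonneg_left hD hk.le) (hg.trans ?_) hg0 (by positivity)
        gcongr
    _ = _ := by unfold UU; ring

theorem rr_log (x y : G) (hx : 0 < x.2.2) (hb : 0 < y.2.2) :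
    Real.log (QQ x y) - Real.log 2 - Real.log x.2.2 - Real.log y.2.2 ≤ rr x y ∧
    rr x y ≤ Real.log (QQ x y) - Real.log x.2.2 - Real.log y.2.2 := by
  have hr := rr_nonneg x y hx hb
  have hch := cosh_rr x y hx hb
  have hQ := QQ_pos x y hx
  constructor
  · have hE : QQ x y / (2 * (x.2.2 * y.2.2)) ≤ Real.exp (rr x y) := by
      rw [← hch, Real.cosh_eq]
      have : Real.exp (-rr x y) ≤ Real.exp (rr x y) := Real.exp_le_exp.2 (by linarith)
      linarith
    have := Real.log_le_log (by positivity) hE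
    rw [Real.log_exp, Real.log_div (by positivity) (by positivity), Real.log_mul (by positivity) (by positivity),
      Real.log_mul (by positivity) (by positivity)] at this
    linarith
  · have hE : Real.exp (rr x y) ≤ QQ x y / (x.2.2 * y.2.2) := by
      have h2 : QQ x y / (x.2.2 * y.2.2) = 2 * Real.cosh (rr x y) := by rw [hch]; field_simp
      rw [h2, Real.cosh_eq]
      linarith [Real.exp_pos (-rr x y)]
    have := Real.log_le_log (by positivity) hE
    rw [Real.log_exp, Real.log_div (by positivity) (by positivity), Real.log_mul (by positivity) (by positivity)] at this
    linarith

theorem b_bounds {y : G} (hy : y ∈ SS) : 1/9 ≤ y.2.2^2 ∧ y.2.2^2 ≤ 8 ∧ |Real.log y.2.2| ≤ 1 := by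
  have hb := SS_pos hy
  have e1 := Real.exp_one_lt_d9
  have e2 : Real.exp (-1) * Real.exp 1 = 1 := by rw [← Real.exp_add]; simp
  have e3 : 1/3 ≤ Real.exp (-1) := by nlinarith [Real.exp_pos (-1)]
  have h1 := hy.2.1
  have h2 := hy.2.2
  refine ⟨by nlinarith, by nlinarith, ?_⟩
  rw [abs_le]
  constructor
  · have := Real.log_le_log (Real.exp_pos _) hy.2.1; rwa [Real.log_exp] at this
  · have := Real.log_le_log hb hy.2.2; rwa [Real.log_exp] at this

theorem one_add_norm_le_QQ (x : G) : 1 + ‖zz x gE‖^2 ≤ QQ x gE := by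
  have hN := norm_sq_le (x.1 - gE.1) (x.2.1 - gE.2.1)
  change ‖zz x gE‖^2 ≤ _ at hN
  have e : QQ x gE = x.2.2^2 + 1 + ((x.1 - gE.1)^2 + (x.2.1-gE.2.1)^2) := by simp [QQ, gE]
  rw [e]
  linarith [sq_nonneg x.2.2]

set_option maxHeartbeats 1000000 in
/-- comparison of Q's in the far region -/
theorem far_Q (x y : G) (hy : y ∈ SS) (hx : 0 < x.2.2)
    (hm : (|y.1| + 3)^2 ≤ ‖zz x gE‖) :
    ∃ h : ℝ, 3 ≤ h ∧ h^4 = QQ x gE ∧ |QQ x y - QQ x gE| ≤ 6 * h^3 ∧ QQ x gE ≤ 9 * QQ x y ∧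
      QQ x y ≤ 3 * QQ x gE := by
  obtain ⟨b1, b2, -⟩ := b_bounds hy
  have hy2 := hy.1
  have hQ0 := QQ_pos x gE hx
  have hzm : ‖zz x gE‖ = max |x.1| |x.2.1| := by simp [zz, gE, Prod.norm_def]
  set m := ‖zz x gE‖
  set L := |y.1| + 3 with hL
  have hL3 : 3 ≤ L := by linarith [abs_nonneg y.1]
  set h := (QQ x gE) ^ (1/4 : ℝ) with hh
  have h4 : h^4 = QQ x gE := by
    rw [hh, ← Real.rpow_natCast, ← Real.rpow_mul hQ0.le]; norm_num
  have hh0 : 0 < h := by positivity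
  have hm0 : 0 ≤ m := norm_nonneg _
  have hqe : QQ x gE = x.2.2^2 + 1 + (x.1^2 + x.2.1^2) := by simp [QQ, gE]
  have hmh : m ≤ h^2 := by
    refine (sq_le_sq₀ hm0 (by positivity)).1 ?_
    rw [← pow_mul, h4, hqe]
    have := one_add_norm_le_QQ x
    rw [hqe] at this
    linarith [sq_nonneg x.2.2]
  have hLh : L ≤ h := (sq_le_sq₀ (by linarith) hh0.le).1 (hm.trans hmh)
  have hx1 : |x.1| ≤ m := by rw [hzm]; exact le_max_left _ _
  have hx2 : |x.2.1| ≤ m := by rw [hzm]; exact le_max_right _ _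
  have hy1 : |y.1| ≤ L - 3 := by linarith
  have h3h : 3 ≤ h := by linarith
  have hdiff : |QQ x y - QQ x gE| ≤ 6 * h^3 := by
    have e : QQ x y - QQ x gE = (y.2.2^2 - 1) + (y.1^2 - 2 * (x.1*y.1)) + (y.2.1^2 - 2*(x.2.1*y.2.1)) := by
      rw [hqe]; unfold QQ; ring
    have p1 : |x.1 * y.1| ≤ h^2 * h := by
      rw [abs_mul]; apply mul_le_mul (by linarith) (by linarith) (abs_nonneg _) (by positivity)
    have p2 : |x.2.1 * y.2.1| ≤ h^2 * h := by
      rw [abs_mul]; apply mul_le_mul (by linarith) (by linarith) (abs_nonneg _) (by positivity)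
    have p3 : y.1^2 ≤ h^2 := by rw [← sq_abs]; gcongr; linarith
    have p4 : y.2.1^2 ≤ h^2 := by rw [← sq_abs]; gcongr; linarith
    have p5 : h^2 * 3 ≤ h^2 * h := by gcongr
    have p6 : 3^3 ≤ h^3 := by gcongr
    rw [abs_le] at p1 p2
    rw [e, abs_le]
    constructor <;> linarith [sq_nonneg y.1, sq_nonneg y.2.1, sq_nonneg y.2.2]
  refine ⟨h, h3h, h4, hdiff, ?_, ?_⟩
  · rw [hqe]; unfold QQ
    have hLm : 3 * L ≤ m := by nlinarith
    have q1 : x.1^2 ≤ m^2 := by rw [← sq_abs]; gcongr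
    have q2 : x.2.1^2 ≤ m^2 := by rw [← sq_abs]; gcongr
    have : 4/9 * m^2 ≤ (x.1-y.1)^2 + (x.2.1-y.2.1)^2 := by
      rcases max_choice |x.1| |x.2.1| with hc | hc
      · have : 2/3 * m ≤ |x.1 - y.1| := by
          have := abs_sub_abs_le_abs_sub x.1 y.1; rw [hc] at hzm; linarith
        have : (2/3*m)^2 ≤ (x.1-y.1)^2 := by rw [← sq_abs (x.1 - y.1)]; gcongr
        linarith [sq_nonneg (x.2.1-y.2.1)]
      · have : 2/3 * m ≤ |x.2.1 - y.2.1| := by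
          have := abs_sub_abs_le_abs_sub x.2.1 y.2.1; rw [hc] at hzm; linarith
        have : (2/3*m)^2 ≤ (x.2.1-y.2.1)^2 := by rw [← sq_abs (x.2.1 - y.2.1)]; gcongr
        linarith [sq_nonneg (x.1-y.1)]
    linarith [sq_nonneg x.2.2, sq_nonneg m]
  · have := (abs_le.1 hdiff).2
    have : h^3 * 3 ≤ h^3 * h := by gcongr
    rw [← h4] at *
    nlinarith

theorem far_nonloc (x y : G) (hm : (|y.1| + 3)^2 ≤ ‖zz x gE‖) : ¬ Loc x y := by
  intro hl
  have hzm : ‖zz x gE‖ = max |x.1| |x.2.1| := by simp [zz, gE, Prod.norm_def]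
  have h1 := hl.2.2.1
  have h2 := hl.2.2.2
  have := abs_sub_abs_le_abs_sub x.1 y.1
  have : max |x.1| |x.2.1| ≤ |y.1| + 2 := max_le (by linarith) (by linarith [abs_nonneg y.1])
  nlinarith [abs_nonneg y.1]

theorem far_D (c a b q q0 h A A0 : ℝ) (hc : 0 < c) (ha : 0 < a) (hh : 3 ≤ h) (hq0 : h^4 = q0)
    (hd : |q - q0| ≤ 6 * h^3) (h9 : q0 ≤ 9 * q) (h3 : q ≤ 3 * q0) (b2 : b^2 ≤ 8)
    (haq : a^2 ≤ q0) (hA : A^2 = q^2/4 - a^2*b^2) (hA0 : A0^2 = q0^2/4 - a^2)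
    (hcA : c * q ≤ A) (hcA0 : c * q0 ≤ A0) : |A⁻¹ - A0⁻¹| ≤ 63 * (c^3)⁻¹ * (h^5)⁻¹ := by
  have q0pos : 0 < q0 := by rw [← hq0]; positivity
  have A0pos : 0 < A0 := lt_of_lt_of_le (by positivity) hcA0
  have qpos : 0 < q := by linarith
  have Apos : 0 < A := lt_of_lt_of_le (by positivity) hcA
  have hsq : |A0^2 - A^2| ≤ 7 * h^7 := by
    have e : A0^2 - A^2 = -((q - q0) * ((q+q0)/4)) + a^2 * (b^2-1) := by rw [hA, hA0]; ring
    have e1 : |(q - q0) * ((q+q0)/4)| ≤ 6 * h^3 * h^4 := by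
      rw [abs_mul, abs_of_pos (by positivity : 0 < (q+q0)/4)]
      apply mul_le_mul hd _ (by positivity) (by positivity)
      rw [hq0]; linarith
    have e2 : |a^2 * (b^2-1)| ≤ h^7 := by
      rw [abs_mul, abs_of_pos (by positivity : 0 < a^2)]
      have : |b^2-1| ≤ h^3 := by
        have : 3^3 ≤ h^3 := by gcongr
        rw [abs_le]; constructor <;> nlinarith [sq_nonneg b]
      calc a^2 * |b^2-1| ≤ h^4 * h^3 := by rw [hq0]; gcongr
        _ = h^7 := by ring
    rw [e]
    refine (abs_add_le _ _).trans ?_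
    rw [abs_neg]
    nlinarith
  have hdA : |A0 - A| ≤ 7 * c⁻¹ * h^3 := by
    have e : A0^2 - A^2 = (A0 - A) * (A0 + A) := by ring
    rw [e, abs_mul, abs_of_pos (by positivity : 0 < A0 + A)] at hsq
    have : c * h^4 ≤ A0 + A := by rw [hq0]; linarith
    have h5 : |A0 - A| * (c * h^4) ≤ 7 * h^7 := le_trans (by gcongr) hsq
    have h6 : |A0 - A| ≤ 7 * h^7 / (c*h^4) := by rw [le_div_iff₀ (by positivity)]; exact h5
    refine h6.trans (le_of_eq ?_)
    field_simp
  rw [inv_sub_inv Apos.ne' A0pos.ne', abs_div, abs_of_pos (by positivity : 0 < A * A0)]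
  rw [div_le_iff₀ (by positivity)]
  have hAA : c * (h^4/9) * (c * h^4) ≤ A * A0 := by
    apply mul_le_mul _ (by rw [hq0]; exact hcA0) (by positivity) Apos.le
    refine le_trans ?_ hcA
    gcongr
    linarith
  calc |A0 - A| ≤ 7 * c⁻¹ * h^3 := hdA
    _ = 63 * (c^3)⁻¹ * (h^5)⁻¹ * (c * (h^4/9) * (c * h^4)) := by field_simp; ring
    _ ≤ _ := by gcongr

theorem A_sq (x y : G) (hx : 0 < x.2.2) (hb : 0 < y.2.2) :
    (x.2.2 * y.2.2 * Real.sinh (rr x y))^2 = (QQ x y)^2/4 - x.2.2^2 * y.2.2^2 := by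
  rw [mul_pow, Real.sinh_sq, cosh_rr x y hx hb]
  field_simp
  ring

set_option maxHeartbeats 1000000 in
theorem far_bound : ∃ C : ℝ, 0 < C ∧ ∀ (t : ℝ) (x y : G), 0 < t → 0 < x.2.2 → y ∈ SS →
    (|y.1| + 3)^2 ≤ ‖zz x gE‖ →
    |KK t x y - KK t x gE| ≤ C * (w1 x.2.2 ^ (-(9/8) : ℝ) * (UU (zz x gE) + UU (zz x y))) := by
  obtain ⟨c, hc, H⟩ := nonloc_bounds
  have hk := kap_pos
  refine ⟨kap * (63 * (c^3)⁻¹ * 4 * (100 * (c^2)⁻¹) + 6 * 1000 * 10 * (c^3)⁻¹ * c⁻¹ * (1 + c⁻¹)),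
    by positivity, ?_⟩
  intro t x y ht hx hy hm
  have hl := far_nonloc x y hm
  have hm0 : (|gE.1| + 3)^2 ≤ ‖zz x gE‖ := by
    refine le_trans ?_ hm
    have : |gE.1| = 0 := by simp [gE]
    rw [this]
    have := abs_nonneg y.1
    gcongr
  have hl0 := far_nonloc x gE hm0
  have hb := SS_pos hy
  have hb0 := SS_pos gE_SS
  obtain ⟨h1, h2, h3, h4⟩ := H x y hx hy hl
  obtain ⟨k1, k2, k3, k4⟩ := H x gE hx gE_SS hl0
  have v1 := w1_ge x.2.2
  have v2 := w2_ge (zz x y)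
  have v20 := w2_ge (zz x gE)
  have hr : 0 < rr x y := lt_of_lt_of_le (by positivity) h1
  have hr0 : 0 < rr x gE := lt_of_lt_of_le (by positivity) k1
  obtain ⟨h, hh, hq0, hd, h9, h3'⟩ := far_Q x y hy hx hm
  obtain ⟨b1, b2, b3⟩ := b_bounds hy
  have hQ := QQ_pos x y hx
  have hQ0 := QQ_pos x gE hx
  have hqe : QQ x gE = x.2.2^2 + 1 + (x.1^2 + x.2.1^2) := by simp [QQ, gE]
  have hge : gE.2.2 = 1 := rfl
  rw [KK_eq t x y hx hb hr, KK_eq t x gE hx hb0 hr0]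
  have As := A_sq x y hx hb
  have As0 := A_sq x gE hx hb0
  set A := x.2.2 * y.2.2 * Real.sinh (rr x y) with hA
  set A0 := x.2.2 * gE.2.2 * Real.sinh (rr x gE) with hA0
  have hDD := far_D c x.2.2 y.2.2 (QQ x y) (QQ x gE) h A A0 hc hx hh hq0 hd h9 h3' b2
    (by rw [hqe]; nlinarith [sq_nonneg x.1, sq_nonneg x.2.1]) As (by rw [As0, hge]; ring) h3 k3
  have hrr : |rr x y - rr x gE| ≤ 6 := by
    obtain ⟨u1, u2⟩ := rr_log x y hx hb
    obtain ⟨u3, u4⟩ := rr_log x gE hx hb0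
    rw [hge, Real.log_one] at u3 u4
    have l2 : Real.log 2 ≤ 1 := by have := Real.log_two_lt_d9; linarith
    have l3 : Real.log 3 ≤ 2 := by have := Real.log_le_sub_one_of_pos (show (0:ℝ) < 3 by norm_num); linarith
    have l9 : Real.log 9 = 2 * Real.log 3 := by
      rw [show (9:ℝ) = 3^2 by norm_num, Real.log_pow]; norm_num
    have m1 := Real.log_le_log hQ0 h9
    have m2 := Real.log_le_log hQ h3'
    rw [Real.log_mul (by norm_num) (by positivity)] at m1 m2
    rw [abs_le] at b3 ⊢
    constructor <;> linarith
  have hw2h : h⁻¹ ≤ 4 * (w2 (zz x gE))⁻¹ := by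
    have : 1 + ‖zz x gE‖^2 ≤ h^4 := by rw [hq0]; exact one_add_norm_le_QQ x
    have l := Real.log_le_log (by positivity) this
    rw [Real.log_pow] at l
    have l' := Real.log_le_sub_one_of_pos (show 0 < h by linarith)
    have : w2 (zz x gE) ≤ 4 * h := by unfold w2; push_cast at l; linarith
    rw [← div_eq_mul_inv, inv_eq_one_div, div_le_div_iff₀ (by linarith) (by linarith)]
    linarith
  have hg0 := gHeat_nonneg t _ ht hr0.le
  have hgle := (gHeat_le t _ ht hr0).trans (mul_le_mul_of_nonneg_left (r_pow_aux c _ _ _ hc v1 v20 k1 k2).1 (by norm_num))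
  have hlip := gHeat_lip t _ _ ht hr hr0
  have r3 := (r_pow_aux c _ _ _ hc v1 v2 h1 h2).2
  have r30 := (r_pow_aux c _ _ _ hc v1 v20 k1 k2).2
  have qi : (QQ x y)⁻¹ ≤ c⁻¹ * (1 + ‖zz x y‖^2)⁻¹ := by
    rw [← mul_inv]; exact inv_anti₀ (by positivity) h4
  have hmq := one_add_norm_le_QQ x
  have qi0 : (QQ x gE)⁻¹ ≤ (1 + ‖zz x gE‖^2)⁻¹ := inv_anti₀ (by positivity) hmq
  have qq0 : (QQ x y)⁻¹ ≤ 9 * (QQ x gE)⁻¹ := by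
    rw [← div_eq_mul_inv, inv_eq_one_div, div_le_div_iff₀ hQ hQ0]; linarith
  have hAi : A⁻¹ ≤ c⁻¹ * (QQ x y)⁻¹ := by
    rw [← mul_inv]; exact inv_anti₀ (by positivity) h3
  have hA1 : 0 ≤ A⁻¹ := by
    have : 0 < A := lt_of_lt_of_le (by positivity) h3
    positivity
  set W := w1 x.2.2 ^ (-(9/8) : ℝ) with hW
  have W0 : 0 ≤ W := by positivity
  set z := zz x y
  set z0 := zz x gE
  have T1 : |A⁻¹ - A0⁻¹| * gHeat t (rr x gE) ≤ (63 * (c^3)⁻¹ * 4 * (100 * (c^2)⁻¹)) * (W * UU z0) := by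
    have e5 : (h^5)⁻¹ = (QQ x gE)⁻¹ * h⁻¹ := by rw [← hq0, ← mul_inv]; ring_nf
    have ew : (w2 z0)⁻¹ * w2 z0 ^ (-(7/8) : ℝ) ≤ w2 z0 ^ (-(9/8) : ℝ) := by
      rw [← Real.rpow_neg_one, ← Real.rpow_add (by linarith)]
      exact Real.rpow_le_rpow_of_exponent_le v20 (by norm_num)
    calc _ ≤ (63 * (c^3)⁻¹ * ((1 + ‖z0‖^2)⁻¹ * (4 * (w2 z0)⁻¹))) * (100 * ((c ^ 2)⁻¹ * (W * w2 z0 ^ (-(7 / 8) : ℝ)))) := by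
          refine mul_le_mul (hDD.trans ?_) hgle hg0 (by positivity)
          rw [e5]
          have hpos : 0 < h := by linarith
          gcongr
      _ = (63 * (c^3)⁻¹ * 4 * (100 * (c^2)⁻¹)) * (W * ((1 + ‖z0‖^2)⁻¹ * ((w2 z0)⁻¹ * w2 z0 ^ (-(7/8) : ℝ)))) := by ring
      _ ≤ _ := by unfold UU; gcongr
  have T2 : A⁻¹ * |gHeat t (rr x y) - gHeat t (rr x gE)| ≤
      6 * 1000 * 10 * (c^3)⁻¹ * c⁻¹ * (1 + c⁻¹) * (W * (UU z0 + UU z)) := by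
    have hU := UU_nonneg z
    have hU0 := UU_nonneg z0
    have s1 : (QQ x y)⁻¹ * (rr x y ^ 3)⁻¹ ≤ c⁻¹ * (c^3)⁻¹ * (W * UU z) := by
      calc _ ≤ (c⁻¹ * (1 + ‖z‖^2)⁻¹) * ((c ^ 3)⁻¹ * (W * w2 z ^ (-(9 / 8) : ℝ))) := by gcongr
        _ = _ := by unfold UU; ring
    have s2 : (QQ x y)⁻¹ * (rr x gE ^ 3)⁻¹ ≤ 9 * (c^3)⁻¹ * (W * UU z0) := by
      calc _ ≤ (9 * (1 + ‖z0‖^2)⁻¹) * ((c ^ 3)⁻¹ * (W * w2 z0 ^ (-(9 / 8) : ℝ))) := by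
            refine mul_le_mul (qq0.trans ?_) r30 (by positivity) (by positivity)
            gcongr
        _ = _ := by unfold UU; ring
    calc _ ≤ (c⁻¹ * (QQ x y)⁻¹) * (1000 * ((rr x y^3)⁻¹ + (rr x gE^3)⁻¹) * 6) := by
          refine mul_le_mul hAi (hlip.trans ?_) (abs_nonneg _) (by positivity)
          gcongr
      _ = 6 * 1000 * c⁻¹ * ((QQ x y)⁻¹ * (rr x y ^ 3)⁻¹ + (QQ x y)⁻¹ * (rr x gE ^ 3)⁻¹) := by ring
      _ ≤ 6 * 1000 * c⁻¹ * (c⁻¹ * (c^3)⁻¹ * (W * UU z) + 9 * (c^3)⁻¹ * (W * UU z0)) := by gcongr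
      _ = 6 * 1000 * (c^3)⁻¹ * c⁻¹ * (c⁻¹ * (W * UU z) + 9 * (W * UU z0)) := by ring
      _ ≤ 6 * 1000 * (c^3)⁻¹ * c⁻¹ * (10 * (1 + c⁻¹) * (W * UU z + W * UU z0)) := by
          gcongr
          have p1 : 0 ≤ W * UU z := by positivity
          have p2 : 0 ≤ W * UU z0 := by positivity
          have p3 : 0 < c⁻¹ := by positivity
          nlinarith [mul_nonneg p3.le p1, mul_nonneg p3.le p2]
      _ = _ := by ring
  have hU := UU_nonneg z
  calc |kap * A⁻¹ * gHeat t (rr x y) - kap * A0⁻¹ * gHeat t (rr x gE)|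
      = kap * |A⁻¹ * (gHeat t (rr x y) - gHeat t (rr x gE)) + (A⁻¹ - A0⁻¹) * gHeat t (rr x gE)| := by
        rw [← abs_of_pos hk, ← abs_mul, abs_of_pos hk]; ring_nf
    _ ≤ kap * (A⁻¹ * |gHeat t (rr x y) - gHeat t (rr x gE)| + |A⁻¹ - A0⁻¹| * gHeat t (rr x gE)) := by
        gcongr
        refine (abs_add_le _ _).trans ?_
        rw [abs_mul, abs_mul, abs_of_nonneg hA1, abs_of_nonneg hg0]
    _ ≤ kap * (6 * 1000 * 10 * (c^3)⁻¹ * c⁻¹ * (1 + c⁻¹) * (W * (UU z0 + UU z)) +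
        (63 * (c^3)⁻¹ * 4 * (100 * (c^2)⁻¹)) * (W * (UU z0 + UU z))) := by
        refine mul_le_mul_of_nonneg_left (add_le_add T2 (T1.trans ?_)) hk.le
        gcongr
        linarith
    _ = _ := by ring

def Lg (s : ℝ) : ℝ := Real.log (|s| + 3)
open Classical in
def Knl (t : ℝ) (x y : G) : ℝ := if Loc x y then 0 else KK t x y

theorem Lg_ge (s : ℝ) : 1 ≤ Lg s := by
  unfold Lg
  rw [Real.le_log_iff_exp_le (by positivity)]
  have := Real.exp_one_lt_d9
  linarith [abs_nonneg s]

theorem near_w2 (L m : ℝ) (hL : 3 ≤ L) (z : ℝ × ℝ) (hz : ‖z‖ ≤ 2 * L^2) (hlog : 1 ≤ Real.log L) :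
    w2 z ≤ 7 * Real.log L := by
  have h1 : 1 + ‖z‖^2 ≤ 5 * L^4 := by
    have : ‖z‖^2 ≤ (2*L^2)^2 := by gcongr
    have : 1 ≤ L^4 := one_le_pow₀ (by linarith)
    nlinarith
  have h2 := Real.log_le_log (by positivity) h1
  rw [Real.log_mul (by norm_num) (by positivity), Real.log_pow] at h2
  have h5 : Real.log 5 ≤ 2 := by
    rw [Real.log_le_iff_le_exp (by norm_num)]
    have : Real.exp 2 = Real.exp 1 * Real.exp 1 := by rw [← Real.exp_add]; norm_num
    have := Real.exp_one_gt_d9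
    nlinarith
  unfold w2
  push_cast at h2
  linarith

theorem key_bound : ∃ C : ℝ, 0 < C ∧ ∀ (t : ℝ) (x y : G), 0 < t → 0 < x.2.2 → y ∈ SS →
    |Knl t x y - Knl t x gE| ≤
      C * (Lg y.1 ^ (1/4 : ℝ) * w1 x.2.2 ^ (-(9/8) : ℝ) * (UU (zz x gE) + UU (zz x y))) := by
  obtain ⟨C1, hC1, H1⟩ := near_bound
  obtain ⟨C2, hC2, H2⟩ := far_bound
  refine ⟨C1 + C2, by positivity, ?_⟩
  intro t x y ht hx hy
  have hlg := Lg_ge y.1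
  have hW := w1_ge x.2.2
  have hU := UU_nonneg (zz x y)
  have hU0 := UU_nonneg (zz x gE)
  have hlg4 : 1 ≤ Lg y.1 ^ (1/4:ℝ) := Real.one_le_rpow hlg (by norm_num)
  by_cases hm : (|y.1| + 3)^2 ≤ ‖zz x gE‖
  · have hm0 : (|gE.1| + 3)^2 ≤ ‖zz x gE‖ := by
      refine le_trans ?_ hm
      have : |gE.1| = 0 := by simp [gE]
      rw [this]
      have := abs_nonneg y.1
      gcongr
    unfold Knl
    rw [if_neg (far_nonloc x y hm), if_neg (far_nonloc x gE hm0)]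
    refine (H2 t x y ht hx hy hm).trans ?_
    have : w1 x.2.2 ^ (-(9/8) : ℝ) * (UU (zz x gE) + UU (zz x y)) ≤
      Lg y.1 ^ (1/4 : ℝ) * (w1 x.2.2 ^ (-(9/8) : ℝ) * (UU (zz x gE) + UU (zz x y))) :=
      le_mul_of_one_le_left (by positivity) hlg4
    rw [← mul_assoc] at this
    gcongr
    linarith
  · push Not at hm
    set L := |y.1| + 3 with hL
    have hL3 : 3 ≤ L := by linarith [abs_nonneg y.1]
    have hz : ‖zz x y‖ ≤ 2 * L^2 := by
      have e : zz x y = zz x gE - (y.1, y.2.1) := by simp [zz, gE]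
      rw [e]
      refine (norm_sub_le _ _).trans ?_
      have : ‖(y.1, y.2.1)‖ ≤ L := by
        rw [Prod.norm_def]; simp only [Real.norm_eq_abs]
        exact max_le (by linarith) (by linarith [hy.1])
      nlinarith
    have wa := near_w2 L 0 hL3 _ hz hlg
    have wb := near_w2 L 0 hL3 _ (hm.le.trans (by nlinarith) : ‖zz x gE‖ ≤ 2 * L^2) hlg
    have B : ∀ y' ∈ SS, w2 (zz x y') ≤ 7 * Lg y.1 → 0 ≤ Knl t x y' ∧ Knl t x y' ≤
        C1 * (Lg y.1 ^ (1/4 : ℝ) * w1 x.2.2 ^ (-(9/8) : ℝ) * UU (zz x y')) := by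
      intro y' hy' hw
      have := UU_nonneg (zz x y')
      unfold Knl
      split_ifs with hl
      · exact ⟨le_rfl, by positivity⟩
      · exact ⟨KK_nonneg t x y' ht hx (SS_pos hy'), H1 t x y' _ ht hx hy' hl hlg hw⟩
    obtain ⟨a1, a2⟩ := B y hy wa
    obtain ⟨a3, a4⟩ := B gE gE_SS wb
    have hX : 0 ≤ Lg y.1 ^ (1/4 : ℝ) * w1 x.2.2 ^ (-(9/8) : ℝ) := by positivity
    calc |Knl t x y - Knl t x gE| ≤ Knl t x gE + Knl t x y := by
          rw [abs_le]; constructor <;> linarith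
      _ ≤ C1 * (Lg y.1 ^ (1/4 : ℝ) * w1 x.2.2 ^ (-(9/8) : ℝ) * (UU (zz x gE) + UU (zz x y))) := by
          linarith
      _ ≤ _ := by gcongr; linarith

def dens (a : ℝ) : ℝ≥0∞ := ENNReal.ofReal (if 0 < a then a⁻¹ else 0)

theorem I1_fin : ∫⁻ a : ℝ, dens a * ENNReal.ofReal (w1 a ^ (-(9/8) : ℝ)) < ⊤ := by
  have h0 : ∫⁻ a : ℝ, dens a * ENNReal.ofReal (w1 a ^ (-(9/8) : ℝ)) =
      ∫⁻ a in Ioi (0:ℝ), dens a * ENNReal.ofReal (w1 a ^ (-(9/8) : ℝ)) := by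
    rw [← lintegral_indicator measurableSet_Ioi]
    congr 1
    ext a
    by_cases ha : 0 < a
    · rw [indicator_of_mem (by exact ha)]
    · rw [indicator_of_notMem (by exact ha), dens, if_neg ha]; simp
  rw [h0, ← Real.range_exp, ← image_univ,
    lintegral_image_eq_lintegral_abs_deriv_mul MeasurableSet.univ
      (fun x _ => (Real.hasDerivAt_exp x).hasDerivWithinAt) (Real.exp_injective.injOn)]
  have := finite_integral_one_add_norm (E := ℝ) (μ := volume) (r := 9/8) (by simp; norm_num)
  refine lt_of_le_of_lt (le_of_eq ?_) this
  rw [setLIntegral_univ]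
  congr 1
  ext v
  rw [dens, if_pos (Real.exp_pos v), ← mul_assoc, ← ENNReal.ofReal_mul (abs_nonneg _), abs_of_pos (Real.exp_pos v),
    mul_inv_cancel₀ (Real.exp_pos v).ne', w1, Real.log_exp]
  simp

theorem I2_fin : ∫⁻ z : ℝ × ℝ, ENNReal.ofReal (UU z) < ⊤ := by
  have h : Integrable (fun z : ℝ × ℝ => (fun s : ℝ => (1 + s^2)⁻¹ * (1 + Real.log (1+s^2)) ^ (-(9/8):ℝ)) ‖z‖) volume := by
    refine (integrable_fun_norm_addHaar volume (f := (fun s : ℝ => (1 + s^2)⁻¹ * (1 + Real.log (1+s^2)) ^ (-(9/8):ℝ)))).2 ?_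
    have hd : ∀ s ∈ Ici (0:ℝ), HasDerivAt (fun s : ℝ => -4 * (1 + Real.log (1+s^2)) ^ (-(1/8):ℝ))
        (s * ((1 + s^2)⁻¹ * (1 + Real.log (1+s^2)) ^ (-(9/8):ℝ))) s := by
      intro s _
      have p : 0 < 1 + s^2 := by positivity
      have p2 : 0 < 1 + Real.log (1+s^2) := by
        have := Real.log_nonneg (x := 1+s^2) (by nlinarith [sq_nonneg s]); linarith
      have h1 : HasDerivAt (fun s : ℝ => 1 + s^2) (2*s) s := by
        simpa using (hasDerivAt_pow 2 s).const_add 1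
      have h2 := ((h1.log p.ne').const_add 1).rpow_const (p := -(1/8)) (Or.inl p2.ne')
      refine (h2.const_mul (-4)).congr_deriv ?_
      have : (-(1/8) - 1 : ℝ) = -(9/8) := by norm_num
      rw [this]
      field_simp
      ring
    have hlim : Tendsto (fun s : ℝ => -4 * (1 + Real.log (1+s^2)) ^ (-(1/8):ℝ)) atTop (nhds (-4 * 0)) := by
      refine Tendsto.const_mul _ ?_
      refine (tendsto_rpow_neg_atTop (by norm_num : (0:ℝ) < 1/8)).comp ?_
      refine tendsto_atTop_add_const_left _ _ (Real.tendsto_log_atTop.comp ?_)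
      exact tendsto_atTop_add_const_left _ _ (tendsto_pow_atTop two_ne_zero)
    have := integrableOn_Ioi_deriv_of_nonneg' hd (fun s hs => by
      have hs : 0 < s := hs
      have := Real.log_nonneg (x := 1+s^2) (by nlinarith [sq_nonneg s])
      positivity) hlim
    simpa using this
  exact h.lintegral_lt_top

def Lam (s : ℝ) : ℝ := ((|s|+3) * Lg s ^ ((3:ℝ)/2))⁻¹

theorem Lam_nonneg (s) : 0 ≤ Lam s := by have := Lg_ge s; unfold Lam; positivity

theorem I3_fin : ∫⁻ s : ℝ, ENNReal.ofReal (Lam s * Lg s ^ (1/4 : ℝ)) < ⊤ := by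
  have h : Integrable (fun z : ℝ => (fun s : ℝ => (s+3)⁻¹ * (Real.log (s+3)) ^ (-(5/4):ℝ)) ‖z‖) volume := by
    refine (integrable_fun_norm_addHaar volume (f := (fun s : ℝ => (s+3)⁻¹ * (Real.log (s+3)) ^ (-(5/4):ℝ)))).2 ?_
    have hp : ∀ s ∈ Ici (0:ℝ), 0 < Real.log (s+3) := by
      intro s hs
      have hs : 0 ≤ s := hs
      exact Real.log_pos (by linarith)
    have hd : ∀ s ∈ Ici (0:ℝ), HasDerivAt (fun s : ℝ => -4 * (Real.log (s+3)) ^ (-(1/4):ℝ))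
        ((s+3)⁻¹ * (Real.log (s+3)) ^ (-(5/4):ℝ)) s := by
      intro s hs
      have p2 := hp s hs
      have hs : 0 ≤ s := hs
      have p : 0 < s + 3 := by positivity
      have h1 : HasDerivAt (fun s : ℝ => s + 3) 1 s := (hasDerivAt_id s).add_const 3
      have h2 := ((h1.log p.ne')).rpow_const (p := -(1/4)) (Or.inl p2.ne')
      refine (h2.const_mul (-4)).congr_deriv ?_
      have : (-(1/4) - 1 : ℝ) = -(5/4) := by norm_num
      rw [this]
      field_simp
    have hlim : Tendsto (fun s : ℝ => -4 * (Real.log (s+3)) ^ (-(1/4):ℝ)) atTop (nhds (-4 * 0)) := by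
      refine Tendsto.const_mul _ ?_
      refine (tendsto_rpow_neg_atTop (by norm_num : (0:ℝ) < 1/4)).comp ?_
      refine (Real.tendsto_log_atTop.comp ?_)
      exact tendsto_atTop_add_const_right _ _ tendsto_id
    have := integrableOn_Ioi_deriv_of_nonneg' hd (fun s hs => by
      have h1 := hp s (Ioi_subset_Ici_self hs)
      have hs : 0 < s := hs
      positivity) hlim
    simpa using this
  refine lt_of_le_of_lt (le_of_eq ?_) h.lintegral_lt_top
  congr 1
  ext s
  congr 1
  have := Lg_ge s
  unfold Lam
  simp only [Real.norm_eq_abs]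
  change _ = (|s|+3)⁻¹ * Lg s ^ (-(5/4):ℝ)
  rw [mul_inv, mul_assoc, ← Real.rpow_neg (by linarith), ← Real.rpow_add (by linarith)]
  norm_num

theorem Lam_mono (u v : ℝ) (hv : |u| + 3 ≤ 2 * (|v| + 3)) : Lam v ≤ 8 * Lam u := by
  have h1 := Lg_ge u
  have h2 := Lg_ge v
  have hl : Lg u ≤ 2 * Lg v := by
    have := Real.log_le_log (by positivity) hv
    rw [Real.log_mul (by norm_num) (by positivity)] at this
    have l2 : Real.log 2 ≤ 1 := by have := Real.log_two_lt_d9; linarith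
    unfold Lg at *
    linarith
  unfold Lam
  have hp : Lg u ^ ((3:ℝ)/2) ≤ 4 * Lg v ^ ((3:ℝ)/2) := by
    calc Lg u ^ ((3:ℝ)/2) ≤ (2 * Lg v) ^ ((3:ℝ)/2) := by gcongr
      _ = 2 ^ ((3:ℝ)/2) * Lg v ^ ((3:ℝ)/2) := by rw [Real.mul_rpow (by norm_num) (by linarith)]
      _ ≤ 2 ^ (2:ℝ) * Lg v ^ ((3:ℝ)/2) := by
          gcongr
          · norm_num
          · norm_num
      _ = _ := by norm_num
  rw [← div_eq_mul_inv, inv_eq_one_div, div_le_div_iff₀ (by positivity) (by positivity)]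
  calc 1 * ((|u|+3) * Lg u ^ ((3:ℝ)/2)) ≤ 1 * ((2 * (|v|+3)) * (4 * Lg v ^ ((3:ℝ)/2))) := by gcongr
    _ = _ := by ring

theorem lint3 {f g h : ℝ → ℝ≥0∞} (hf : Measurable f) (hg : Measurable g) (hh : Measurable h) :
    ∫⁻ x : G, f x.1 * (g x.2.1 * h x.2.2) = (∫⁻ u, f u) * ((∫⁻ u, g u) * ∫⁻ u, h u) := by
  have h1 : Measurable (fun q : ℝ × ℝ => g q.1 * h q.2) := by fun_prop
  rw [← lintegral_prod_mul (μ := (volume : Measure ℝ)) (ν := (volume : Measure ℝ))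
    hg.aemeasurable hh.aemeasurable,
    ← lintegral_prod_mul (μ := (volume : Measure ℝ)) (ν := ((volume : Measure ℝ).prod volume)) 
    hf.aemeasurable h1.aemeasurable]
  rfl

def g3 (t u : ℝ) : ℝ := (√t)⁻¹ * Real.exp (-(364*t)⁻¹ * u^2)

theorem g3_nonneg (t u) : 0 ≤ g3 t u := by unfold g3; positivity

theorem g3_int (t x : ℝ) (ht : 0 < t) :
    ∫⁻ u, ENNReal.ofReal (g3 t (x-u)) = ENNReal.ofReal (√(π*364)) := by
  rw [lintegral_sub_left_eq_self (fun u => ENNReal.ofReal (g3 t u)) x,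
    ← ofReal_integral_eq_lintegral_ofReal]
  · unfold g3
    rw [integral_const_mul, integral_gaussian]
    congr 1
    rw [div_inv_eq_mul, ← mul_assoc, Real.sqrt_mul (by positivity)]
    have : √t ≠ 0 := by positivity
    field_simp
  · exact (integrable_exp_neg_mul_sq (by positivity)).const_mul _
  · exact ae_of_all _ (g3_nonneg t)

theorem g3_prod (t u v w : ℝ) (ht : 0 < t) : g3 t u * (g3 t v * g3 t w) =
    t ^ (-(3:ℝ)/2) * Real.exp (-((u^2+v^2+w^2)/91)/(4*t)) := by
  rw [rpow_neg_three_half t ht]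
  unfold g3
  have : Real.exp (-((u^2+v^2+w^2)/91)/(4*t)) = Real.exp (-(364*t)⁻¹ * u^2) * (Real.exp (-(364*t)⁻¹ * v^2) * Real.exp (-(364*t)⁻¹ * w^2)) := by
    rw [← Real.exp_add, ← Real.exp_add]
    congr 1
    field_simp
    ring
  rw [this, inv_pow_three_aux]
  ring
where inv_pow_three_aux : (√t^3)⁻¹ = (√t)⁻¹ * (√t)⁻¹ * (√t)⁻¹ := by rw [pow_three]; simp [mul_assoc]

theorem exp1_lt : Real.exp 1 < 2.72 := by have := Real.exp_one_lt_d9; linarith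
theorem exp2_eq : Real.exp 2 = Real.exp 1 * Real.exp 1 := by rw [← Real.exp_add]; norm_num

theorem loc_r (x y : G) (hx : 0 < x.2.2) (hy : y ∈ SS) (hl : Loc x y) :
    ((x.1-y.1)^2 + (x.2.1-y.2.1)^2 + (x.2.2-y.2.2)^2)/91 ≤ rr x y ^ 2 := by
  have hb := SS_pos hy
  have hc := cosh_rr x y hx hb
  have hr := rr_nonneg x y hx hb
  obtain ⟨s1, s2, s3⟩ := hy
  obtain ⟨l1, l2, l3, l4⟩ := hl
  set r := rr x y
  have e1 := exp1_lt
  have e0 := Real.exp_pos 1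
  have a8 : x.2.2 ≤ 7.4 := by rw [exp2_eq] at l2; nlinarith
  have b3 : y.2.2 ≤ 2.72 := by linarith
  rcases le_total r 1 with h | h
  · have k1 := Real.cosh_le_exp_half_sq r
    have k2 : Real.exp (r^2/2) ≤ 1 + r^2 := by
      have v0 : 0 ≤ r^2/2 := by positivity
      have v1 : r^2/2 ≤ 1/2 := by nlinarith
      have := Real.abs_exp_sub_one_sub_id_le (x := r^2/2) (by rw [abs_of_nonneg v0]; linarith)
      have := (abs_le.1 this).2
      nlinarith
    rw [hc] at k1
    have k3 := k1.trans k2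
    rw [div_le_iff₀ (by positivity)] at k3
    unfold QQ at k3
    have ab : x.2.2 * y.2.2 ≤ 7.4*2.72 := by gcongr
    nlinarith [mul_le_mul_of_nonneg_left ab (sq_nonneg r)]
  · have A := abs_le.1 s1
    have B := abs_le.1 l3
    have D := abs_le.1 l4
    have d1 : (x.1-y.1)^2 ≤ 1 := by nlinarith
    have d2 : (x.2.1-y.2.1)^2 ≤ 9 := by nlinarith
    have d3 : (x.2.2-y.2.2)^2 ≤ 81 := by nlinarith
    nlinarith

def Dloc (x : G) : ℝ≥0∞ := ENNReal.ofReal (Lam x.1) *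
  ((Icc (-2:ℝ) 2).indicator 1 x.2.1 * (Icc (Real.exp (-2)) (Real.exp 2)).indicator 1 x.2.2)

theorem meas_dens : Measurable dens := by
  unfold dens
  refine ENNReal.measurable_ofReal.comp ?_
  exact Measurable.ite measurableSet_Ioi measurable_inv measurable_const

theorem ρG_eq : ρG = (volume : Measure G).withDensity fun x => dens x.2.2 := rfl

theorem meas_dens' : Measurable (fun x : G => dens x.2.2) := meas_dens.comp (by fun_prop)

open Classical in
theorem loc_bound : ∃ C : ℝ, 0 ≤ C ∧ ∀ t x, 0 < t → 0 < x.2.2 → 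
    ∫⁻ y, (if y ∈ SS ∧ Loc x y then ENNReal.ofReal (Lam y.1 * KK t x y) else 0) ∂ρG
      ≤ ENNReal.ofReal C * Dloc x := by
  refine ⟨8 * kap * Real.exp 4 * √(π*364)^3, by have := kap_pos; positivity, ?_⟩
  intro t x ht hx
  have hk := kap_pos
  rw [ρG_eq]
  refine (lintegral_withDensity_le_lintegral_mul _ meas_dens' _).trans ?_
  by_cases hx2 : Real.exp (-2) ≤ x.2.2 ∧ x.2.2 ≤ Real.exp 2 ∧ |x.2.1| ≤ 2
  · have hD : Dloc x = ENNReal.ofReal (Lam x.1) := by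
      unfold Dloc
      rw [indicator_of_mem (by simpa [abs_le] using hx2.2.2), indicator_of_mem (by exact ⟨hx2.1, hx2.2.1⟩)]
      simp
    have hpt : ∀ y : G, dens y.2.2 * (if y ∈ SS ∧ Loc x y then ENNReal.ofReal (Lam y.1 * KK t x y) else 0) ≤
        ENNReal.ofReal (8 * kap * Real.exp 4 * Lam x.1) * (ENNReal.ofReal (g3 t (x.1-y.1)) * 
        (ENNReal.ofReal (g3 t (x.2.1-y.2.1)) * ENNReal.ofReal (g3 t (x.2.2-y.2.2)))) := by
      intro y
      split_ifs with h
      swap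
      · simp
      have hb := SS_pos h.1
      have hL := Lam_nonneg y.1
      have hL' := Lam_nonneg x.1
      have hK := KK_nonneg t x y ht hx hb
      rw [dens, if_pos hb, ← ENNReal.ofReal_mul (by positivity), ← ENNReal.ofReal_mul (g3_nonneg _ _),
        ← ENNReal.ofReal_mul (g3_nonneg _ _), ← ENNReal.ofReal_mul (by positivity)]
      apply ENNReal.ofReal_le_ofReal
      rw [g3_prod t _ _ _ ht]
      have hLL : Lam y.1 ≤ 8 * Lam x.1 := by
        apply Lam_mono
        have h4 := h.2.2.2.2
        have := abs_sub_abs_le_abs_sub x.1 y.1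
        have := abs_nonneg y.1
        linarith
      have hr := loc_r x y hx h.1 h.2
      have hKl := KK_le t x y ht hx hb
      have hbi : (y.2.2)⁻¹ ≤ Real.exp 1 := by
        rw [inv_le_comm₀ hb (by positivity), ← Real.exp_neg]; exact h.1.2.1
      have hai : (x.2.2)⁻¹ ≤ Real.exp 2 := by
        rw [inv_le_comm₀ hx (by positivity), ← Real.exp_neg]; exact h.2.1
      have he : Real.exp 4 = Real.exp 1 * (Real.exp 2 * Real.exp 1) := by
        rw [← Real.exp_add, ← Real.exp_add]; norm_num
      have hKl2 : KK t x y ≤ kap * (Real.exp 2 * Real.exp 1) * t ^ (-(3 : ℝ)/2) * 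
          Real.exp (-((((x.1-y.1)^2 + (x.2.1-y.2.1)^2 + (x.2.2-y.2.2)^2)/91)) / (4 * t)) := by
        refine hKl.trans ?_
        rw [mul_inv]
        gcongr
      calc (y.2.2)⁻¹ * (Lam y.1 * KK t x y) ≤ Real.exp 1 * (8 * Lam x.1 * (kap * (Real.exp 2 * Real.exp 1) * t ^ (-(3 : ℝ)/2) * 
          Real.exp (-((((x.1-y.1)^2 + (x.2.1-y.2.1)^2 + (x.2.2-y.2.2)^2)/91)) / (4 * t)))) := by gcongr
        _ = _ := by rw [he]; ring
    calc _ ≤ _ := lintegral_mono hpt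
      _ = _ := by
        rw [lintegral_const_mul]
        swap
        · unfold g3; fun_prop
        rw [lint3 (f := fun u => ENNReal.ofReal (g3 t (x.1-u))) (g := fun u => ENNReal.ofReal (g3 t (x.2.1-u)))
          (h := fun u => ENNReal.ofReal (g3 t (x.2.2-u))) (by unfold g3; fun_prop) (by unfold g3; fun_prop) (by unfold g3; fun_prop),
          g3_int _ _ ht, g3_int _ _ ht, g3_int _ _ ht, hD]
        have hL' := Lam_nonneg x.1
        rw [← ENNReal.ofReal_mul (by positivity), ← ENNReal.ofReal_mul (by positivity),
          ← ENNReal.ofReal_mul (by positivity), ← ENNReal.ofReal_mul (by positivity)]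
        congr 1
        ring
      _ ≤ _ := le_rfl
  · refine le_trans (le_of_eq ?_) zero_le
    rw [← lintegral_zero (μ := (volume : Measure G))]
    congr 1
    ext y
    simp only [Pi.mul_apply]
    rw [if_neg]
    · simp
    · rintro ⟨_, h1, h2, h3, _⟩
      exact hx2 ⟨h1, h2, h3⟩

theorem ton3 {H : G → ℝ≥0∞} (hH : Measurable H) :
    ∫⁻ y : G, H y = ∫⁻ b : ℝ, ∫⁻ v : ℝ, ∫⁻ u : ℝ, H (u, v, b) := by
  change ∫⁻ y, H y ∂((volume : Measure ℝ).prod (volume : Measure (ℝ×ℝ))) = _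
  rw [lintegral_prod_symm' _ hH]
  change ∫⁻ y, _ ∂((volume : Measure ℝ).prod (volume : Measure (ℝ))) = _
  rw [lintegral_prod_symm' _ (by exact Measurable.lintegral_prod_left' hH)]

theorem lin1 (Φ : ℝ → ℝ≥0∞) (hΦ : Measurable Φ) (p q : ℝ) (hq : q ≠ 0) :
    ∫⁻ u, Φ (p + q * u) = ENNReal.ofReal |q⁻¹| * ∫⁻ u, Φ u := by
  rw [← lintegral_add_left_eq_self Φ p, ← smul_eq_mul, ← lintegral_smul_measure,
    ← Real.map_volume_mul_left hq, lintegral_map (by fun_prop) (by fun_prop)]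

theorem dens_exp (Φ : ℝ → ℝ≥0∞) : ∫⁻ b, dens b * Φ b = ∫⁻ s, Φ (Real.exp s) := by
  have h0 : ∫⁻ a : ℝ, dens a * Φ a = ∫⁻ a in Ioi (0:ℝ), dens a * Φ a := by
    rw [← lintegral_indicator measurableSet_Ioi]
    congr 1
    ext a
    by_cases ha : 0 < a
    · rw [indicator_of_mem (by exact ha)]
    · rw [indicator_of_notMem (by exact ha), dens, if_neg ha]; simp
  rw [h0, ← Real.range_exp, ← image_univ,
    lintegral_image_eq_lintegral_abs_deriv_mul MeasurableSet.univ
      (fun x _ => (Real.hasDerivAt_exp x).hasDerivWithinAt) (Real.exp_injective.injOn)]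
  rw [setLIntegral_univ]
  congr 1
  ext v
  rw [dens, if_pos (Real.exp_pos v), ← mul_assoc, ← ENNReal.ofReal_mul (abs_nonneg _), abs_of_pos (Real.exp_pos v),
    mul_inv_cancel₀ (Real.exp_pos v).ne']
  simp

theorem dens_inv (Φ : ℝ → ℝ≥0∞) (a : ℝ) (ha : 0 < a) :
    ∫⁻ b, dens b * Φ (a * (1 / b)) = ∫⁻ b, dens b * Φ b := by
  rw [dens_exp (fun b => Φ (a * (1/b))), dens_exp,
    ← lintegral_sub_left_eq_self (fun s => Φ (Real.exp s)) (Real.log a)]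
  congr 1
  ext s
  rw [Real.exp_sub, Real.exp_log ha, mul_one_div]

def TT (x y : G) : G := gMul x (gInv y)

theorem TT_meas (x : G) : Measurable (TT x) := by
  unfold TT gMul gInv; fun_prop

theorem delta_meas : Measurable deltaG := by unfold deltaG; fun_prop

theorem lint_TT (x : G) (hx : 0 < x.2.2) (F : G → ℝ≥0∞) (hF : Measurable F) :
    ∫⁻ y, F (TT x y) ∂ρG = ∫⁻ z, ENNReal.ofReal (deltaG z) * F z ∂ρG := by
  have hT := TT_meas x
  have hd := delta_meas
  have hde := meas_dens'
  rw [ρG_eq, lintegral_withDensity_eq_lintegral_mul _ hde (by fun_prop),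
    lintegral_withDensity_eq_lintegral_mul _ hde (by fun_prop),
    ton3 (by fun_prop), ton3 (by fun_prop)]
  simp only [Pi.mul_apply]
  have hdt : ∀ b, dens b ≠ ⊤ := fun b => ENNReal.ofReal_ne_top
  set a := x.2.2
  have e1 : ∀ b : ℝ, ∫⁻ v : ℝ, ∫⁻ u : ℝ, dens b * F (TT x (u, v, b)) =
      dens b * (ENNReal.ofReal (((a * (1/b))^2)⁻¹) * ∫⁻ v : ℝ, ∫⁻ u : ℝ, F (u, v, a * (1/b))) := by
    intro b
    by_cases hb : 0 < b
    swap
    · simp [dens, hb]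
    have hq : - (a * (1/b)) ≠ 0 := by
      have : 0 < a * (1/b) := by positivity
      linarith
    simp_rw [lintegral_const_mul' _ _ (hdt b)]
    congr 1
    have i1 : ∀ v, ∫⁻ u : ℝ, F (TT x (u, v, b)) = ENNReal.ofReal |(-(a * (1/b)))⁻¹| *
        ∫⁻ u : ℝ, F (u, x.2.1 + (-(a*(1/b))) * v, a * (1/b)) := by
      intro v
      rw [← lin1 (fun u => F (u, x.2.1 + (-(a*(1/b))) * v, a * (1/b))) (by fun_prop) x.1 _ hq]
      congr 1
      ext u
      congr 1
      unfold TT gMul gInv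
      simp only [Prod.mk.injEq]
      refine ⟨by ring, by ring, rfl⟩
    simp_rw [i1]
    rw [lintegral_const_mul' _ _ ENNReal.ofReal_ne_top,
      lin1 (fun v => ∫⁻ u : ℝ, F (u, v, a * (1/b))) (by
        exact Measurable.lintegral_prod_left' (f := fun q : ℝ × ℝ => F (q.1, q.2, a * (1/b))) (by fun_prop)) x.2.1 _ hq,
      ← mul_assoc, ← ENNReal.ofReal_mul (abs_nonneg _)]
    congr 2
    rw [abs_mul_abs_self]
    field_simp
  simp_rw [e1]
  rw [dens_inv (fun c => ENNReal.ofReal ((c^2)⁻¹) * ∫⁻ v : ℝ, ∫⁻ u : ℝ, F (u, v, c)) a hx]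
  congr 1
  ext c
  simp only [deltaG]
  simp_rw [lintegral_const_mul' _ _ (hdt c), lintegral_const_mul' _ _ ENNReal.ofReal_ne_top]

theorem map_TT (x : G) (hx : 0 < x.2.2) :
    Measure.map (TT x) ρG = ρG.withDensity (fun z => ENNReal.ofReal (deltaG z)) := by
  have hT := TT_meas x
  have hd := delta_meas
  ext s hs
  have := lint_TT x hx (s.indicator 1) (measurable_one.indicator hs)
  rw [Measure.map_apply hT hs, withDensity_apply _ hs, ← lintegral_indicator hs,
    ← lintegral_indicator_one (hT hs)]
  refine Eq.trans ?_ (this.trans ?_)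
  · rfl
  · congr 1
    ext z
    by_cases h : z ∈ s <;> simp [h]

theorem ae_pos : ∀ᵐ y ∂ρG, 0 < y.2.2 := by
  rw [ρG_eq, ae_withDensity_iff meas_dens']
  refine ae_of_all _ fun y h => ?_
  by_contra h'
  simp [dens, h'] at h

theorem heatK_meas (t : ℝ) : Measurable (heatK t) := by
  have h1 : Measurable rG := by unfold rG coshArg; fun_prop
  have hd := delta_meas
  have h2 : Measurable (fun x => if rG x = 0 then (1:ℝ) else rG x / Real.sinh (rG x)) := by
    refine Measurable.ite (h1 (measurableSet_singleton 0)) measurable_const ?_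
    exact h1.div (Real.measurable_sinh.comp h1)
  unfold heatK
  fun_prop

theorem KK_meas (t : ℝ) (x : G) : Measurable (KK t x) := by
  have h1 := heatK_meas t
  have hd := delta_meas
  have h2 : Measurable (fun y => gMul (gInv y) x) := by unfold gMul gInv; fun_prop
  unfold KK
  fun_prop

theorem conv_eq (f : G → ℝ) (hf : Measurable f) (t : ℝ) (x : G) (hx : 0 < x.2.2) :
    convHeat f t x = ∫ z, f z * KK t x z ∂ρG := by
  have h1 := heatK_meas t
  have h2 : Measurable (fun y => gMul (gInv y) x) := by unfold gMul gInv; fun_prop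
  have hd := delta_meas
  have : convHeat f t x = ∫ y, (fun z => f z * heatK t (gMul (gInv z) x)) (TT x y) ∂ρG := by
    unfold convHeat
    refine integral_congr_ae ?_
    filter_upwards [ae_pos] with y hy
    have : gMul (gInv (TT x y)) x = y := by
      unfold TT gMul gInv
      ext <;> simp only <;> field_simp <;> ring
    simp only [this]
    rfl
  rw [this, ← integral_map (f := fun z => f z * heatK t (gMul (gInv z) x)) (TT_meas x).aemeasurable (by
      exact (Measurable.aestronglyMeasurable (by fun_prop))), map_TT x hx,
    integral_withDensity_eq_integral_toReal_smul (by fun_prop) (by simp)]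
  congr 1
  ext z
  rw [ENNReal.toReal_ofReal (by unfold deltaG; positivity)]
  simp [KK]
  ring

instance sfin_ρG : SFinite ρG := by unfold ρG; infer_instance

theorem Lg_meas : Measurable Lg := by unfold Lg; fun_prop
theorem Lam_meas : Measurable Lam := by have := Lg_meas; unfold Lam; fun_prop
theorem w1_meas : Measurable w1 := by unfold w1; fun_prop
theorem UU_meas : Measurable UU := by unfold UU w2; fun_prop

theorem SS_meas : MeasurableSet SS := by
  have : SS = (fun y : G => y.2.1) ⁻¹' (Icc (-1) 1) ∩ (fun y : G => y.2.2) ⁻¹' (Icc (Real.exp (-1)) (Real.exp 1)) := by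
    ext y; simp [SS, abs_le]
  rw [this]
  exact (measurableSet_Icc.preimage (by fun_prop)).inter (measurableSet_Icc.preimage (by fun_prop))

theorem f_meas (c0 : ℝ) : Measurable (fSpecial c0) := by
  have h1 : MeasurableSet domSpecial := by
    have : domSpecial = (fun y : G => y.1) ⁻¹' (Ioi 3) ∩ ((fun y : G => y.2.1) ⁻¹' (Ioo (-1) 1) ∩ (fun y : G => y.2.2) ⁻¹' (Ioo (Real.exp (-1)) (Real.exp 1))) := by
      ext y; simp [domSpecial, abs_lt]
    rw [this]
    exact (measurableSet_Ioi.preimage (by fun_prop)).inter ((measurableSet_Ioo.preimage (by fun_prop)).inter (measurableSet_Ioo.preimage (by fun_prop)))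
  have h2 : MeasurableSet R0set := measurableSet_Icc.prod (measurableSet_Icc.prod measurableSet_Icc)
  unfold fSpecial
  exact (Measurable.indicator (by fun_prop) h1).add (measurable_const.indicator h2)

theorem f_bound (c0 : ℝ) : ∃ C : ℝ, 0 ≤ C ∧ ∀ y, (y ∈ SS → |fSpecial c0 y| ≤ C * Lam y.1) ∧ (y ∉ SS → fSpecial c0 y = 0) := by
  have L0 : 0 < Lam 0 := by have := Lg_ge 0; unfold Lam; positivity
  refine ⟨8 + |c0| * (8 / Lam 0), by positivity, fun y => ⟨fun _ => ?_, fun hy => ?_⟩⟩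
  · unfold fSpecial
    have hL := Lam_nonneg y.1
    refine (abs_add_le _ _).trans ?_
    rw [add_mul]
    refine add_le_add ?_ ?_
    · by_cases h : y ∈ domSpecial
      · rw [indicator_of_mem h]
        have h3 : 3 < y.1 := h.1
        have hl : 0 < Real.log y.1 := Real.log_pos (by linarith)
        rw [abs_of_nonneg (by positivity)]
        have hlg := Lg_ge y.1
        have hle : Lg y.1 ≤ 2 * Real.log y.1 := by
          unfold Lg
          rw [abs_of_pos (by linarith), two_mul, ← Real.log_mul (by positivity) (by positivity)]
          exact Real.log_le_log (by positivity) (by nlinarith)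
        unfold Lam
        rw [← div_eq_mul_inv, inv_eq_one_div, div_le_div_iff₀ (by positivity) (by positivity),
          abs_of_pos (by linarith)]
        have hp : Lg y.1 ^ ((3:ℝ)/2) ≤ 4 * Real.log y.1 ^ ((3:ℝ)/2) := by
          calc Lg y.1 ^ ((3:ℝ)/2) ≤ (2 * Real.log y.1) ^ ((3:ℝ)/2) := by gcongr
            _ = 2 ^ ((3:ℝ)/2) * Real.log y.1 ^ ((3:ℝ)/2) := by rw [Real.mul_rpow (by norm_num) (by linarith)]
            _ ≤ 2 ^ (2:ℝ) * Real.log y.1 ^ ((3:ℝ)/2) := by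
                gcongr
                · norm_num
                · norm_num
            _ = _ := by norm_num
        calc 1 * ((y.1 + 3) * Lg y.1 ^ ((3:ℝ)/2)) ≤ 1 * ((2 * y.1) * (4 * Real.log y.1 ^ ((3:ℝ)/2))) := by
              gcongr; linarith
          _ = _ := by ring
      · rw [indicator_of_notMem h]; simp; positivity
    · by_cases h : y ∈ R0set
      · rw [indicator_of_mem h]
        have h1 : |y.1| ≤ 1 := abs_le.2 h.1
        have := Lam_mono y.1 0 (by simp; linarith)
        calc |c0| = |c0| * (1 / Lam 0) * Lam 0 := by field_simp
          _ ≤ |c0| * (1 / Lam 0) * (8 * Lam y.1) := by gcongr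
          _ = _ := by ring
      · rw [indicator_of_notMem h]; simp; positivity
  · unfold fSpecial
    rw [indicator_of_notMem, indicator_of_notMem, add_zero]
    · exact fun h => hy ⟨abs_le.2 h.2.1, h.2.2.1, h.2.2.2⟩
    · exact fun h => hy ⟨h.2.1.le, h.2.2.1.le, h.2.2.2.le⟩

theorem ind_meas (a b : ℝ) : Measurable ((Icc a b).indicator (1 : ℝ → ℝ≥0∞)) :=
  measurable_one.indicator measurableSet_Icc

theorem prod_fin (g : ℝ → ℝ≥0∞) (hg : Measurable g) (hfin : ∫⁻ s, g s < ⊤) (m n : ℝ) :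
    ∫⁻ y, g y.1 * ((Icc (-m) m).indicator 1 y.2.1 * (Icc (Real.exp (-n)) (Real.exp n)).indicator 1 y.2.2) ∂ρG < ⊤ := by
  have i1 := ind_meas (-m) m
  have i2 := ind_meas (Real.exp (-n)) (Real.exp n)
  have i3 := meas_dens
  rw [ρG_eq, lintegral_withDensity_eq_lintegral_mul _ meas_dens' (by fun_prop)]
  have := lint3 hg i1 (i3.mul i2)
  refine lt_of_le_of_lt (le_of_eq (Eq.trans ?_ this)) ?_
  · congr 1
    ext y
    simp only [Pi.mul_apply]
    ring
  refine ENNReal.mul_lt_top hfin (ENNReal.mul_lt_top ?_ ?_)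
  · rw [lintegral_indicator_one measurableSet_Icc]; exact measure_Icc_lt_top
  · simp only [Pi.mul_apply]
    rw [dens_exp]
    have : ∀ s, (Icc (Real.exp (-n)) (Real.exp n)).indicator (1 : ℝ → ℝ≥0∞) (Real.exp s) = (Icc (-n) n).indicator 1 s := by
      intro s; simp [indicator]
    simp_rw [this]
    rw [lintegral_indicator_one measurableSet_Icc]; exact measure_Icc_lt_top

def WW (y : G) : ℝ≥0∞ := ENNReal.ofReal (Lam y.1 * Lg y.1 ^ (1/4 : ℝ)) *
  ((Icc (-1:ℝ) 1).indicator 1 y.2.1 * (Icc (Real.exp (-1)) (Real.exp 1)).indicator 1 y.2.2)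

theorem WW_meas : Measurable WW := by
  have i1 := ind_meas (-1) 1
  have i2 := ind_meas (Real.exp (-1)) (Real.exp 1)
  have := Lam_meas
  have := Lg_meas
  unfold WW
  fun_prop

theorem WW_fin : ∫⁻ y, WW y ∂ρG < ⊤ := by
  have := Lam_meas
  have := Lg_meas
  exact prod_fin _ (by fun_prop) I3_fin 1 1

theorem WW_SS (y : G) (hy : y ∈ SS) : WW y = ENNReal.ofReal (Lam y.1 * Lg y.1 ^ (1/4 : ℝ)) := by
  unfold WW
  rw [indicator_of_mem (by exact abs_le.1 hy.1), indicator_of_mem (by exact hy.2)]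
  simp

theorem Lam_fin : ∫⁻ s, ENNReal.ofReal (Lam s) < ⊤ := by
  refine lt_of_le_of_lt (lintegral_mono fun s => ?_) I3_fin
  refine ENNReal.ofReal_le_ofReal (le_mul_of_one_le_right (Lam_nonneg s) ?_)
  exact Real.one_le_rpow (Lg_ge s) (by norm_num)

theorem Dloc_fin : ∫⁻ x, Dloc x ∂ρG < ⊤ := by
  have := Lam_meas
  exact prod_fin (fun s => ENNReal.ofReal (Lam s)) (by fun_prop) Lam_fin 2 2

def ww (a : ℝ) : ℝ≥0∞ := ENNReal.ofReal (w1 a ^ (-(9/8) : ℝ))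
theorem ww_meas : Measurable ww := by have := w1_meas; unfold ww; fun_prop
def UE (z : ℝ × ℝ) : ℝ≥0∞ := ENNReal.ofReal (UU z)
theorem UE_meas : Measurable UE := by have := UU_meas; unfold UE; fun_prop
theorem UEzz_meas : Measurable (fun p : G × G => UE (zz p.1 p.2)) := by
  have := UE_meas; unfold zz; fun_prop

theorem J_eq (y : G) : ∫⁻ x, ww x.2.2 * UE (zz x y) ∂ρG =
    (∫⁻ a, dens a * ww a) * ∫⁻ z, UE z := by
  have h1 := ww_meas
  have h2 := UE_meas
  have h3 := meas_dens
  have h4 : Measurable (fun x : G => zz x y) := by unfold zz; fun_prop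
  rw [ρG_eq, lintegral_withDensity_eq_lintegral_mul _ meas_dens' (by fun_prop), ton3 (by fun_prop)]
  simp only [Pi.mul_apply]
  have i2 : ∫⁻ z, UE z = ∫⁻ v : ℝ, ∫⁻ u : ℝ, UE (u, v) := by
    change ∫⁻ z, UE z ∂((volume : Measure ℝ).prod volume) = _
    rw [lintegral_prod_symm' _ h2]
  have hdt : ∀ b, dens b ≠ ⊤ := fun b => ENNReal.ofReal_ne_top
  have hwt : ∀ b, ww b ≠ ⊤ := fun b => ENNReal.ofReal_ne_top
  rw [← lintegral_mul_const _ (by fun_prop)]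
  congr 1
  ext a
  simp_rw [lintegral_const_mul' _ _ (hdt a), lintegral_const_mul' _ _ (hwt a)]
  rw [mul_assoc, i2]
  congr 2
  simp only [zz]
  have : ∀ v, ∫⁻ u : ℝ, UE (u - y.1, v) = ∫⁻ u : ℝ, UE (u, v) := fun v =>
    lintegral_sub_right_eq_self (fun u => UE (u, v)) y.1
  simp_rw [this]
  exact lintegral_sub_right_eq_self (fun v => ∫⁻ u, UE (u, v)) y.2.1

def BB (x : G) : ℝ≥0∞ := ∫⁻ y, WW y * (ww x.2.2 * UE (zz x gE) + ww x.2.2 * UE (zz x y)) ∂ρG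

theorem BB_fin : ∫⁻ x, BB x ∂ρG < ⊤ := by
  have h1 := ww_meas
  have h2 := UE_meas
  have h3 := WW_meas
  have h4 := UEzz_meas
  unfold BB
  rw [lintegral_lintegral_swap]
  swap
  · refine Measurable.aemeasurable ?_
    simp only [Function.uncurry_def]
    have : Measurable (fun p : G × G => UE (zz p.1 gE)) := by unfold zz; fun_prop
    fun_prop
  have : ∀ y, ∫⁻ x, WW y * (ww x.2.2 * UE (zz x gE) + ww x.2.2 * UE (zz x y)) ∂ρG =
      WW y * ((∫⁻ a, dens a * ww a) * (∫⁻ z, UE z) + (∫⁻ a, dens a * ww a) * ∫⁻ z, UE z) := by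
    intro y
    have m1 : ∀ y, Measurable (fun x : G => UE (zz x y)) := fun y => by unfold zz; fun_prop
    have := m1 gE
    have := m1 y
    rw [lintegral_const_mul _ (by fun_prop), lintegral_add_left (by fun_prop), J_eq, J_eq]
  simp_rw [this]
  rw [lintegral_mul_const _ h3]
  have a1 : ∫⁻ a, dens a * ww a < ⊤ := I1_fin
  have a2 : ∫⁻ z, UE z < ⊤ := I2_fin
  exact ENNReal.mul_lt_top WW_fin (ENNReal.add_lt_top.2 ⟨ENNReal.mul_lt_top a1 a2, ENNReal.mul_lt_top a1 a2⟩)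

theorem f_int (c0 : ℝ) : Integrable (fSpecial c0) ρG := by
  obtain ⟨C, hC, hb⟩ := f_bound c0
  refine ⟨(f_meas c0).aestronglyMeasurable, ?_⟩
  refine lt_of_le_of_lt (b := ∫⁻ y, ENNReal.ofReal C * WW y ∂ρG) (lintegral_mono fun y => ?_) ?_
  · by_cases hy : y ∈ SS
    · rw [WW_SS y hy, ← ENNReal.ofReal_mul hC, Real.enorm_eq_ofReal_abs]
      refine ENNReal.ofReal_le_ofReal (((hb y).1 hy).trans ?_)
      gcongr
      exact le_mul_of_one_le_right (Lam_nonneg _) (Real.one_le_rpow (Lg_ge _) (by norm_num))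
    · rw [(hb y).2 hy]; simp
  · rw [lintegral_const_mul _ WW_meas]
    exact ENNReal.mul_lt_top ENNReal.ofReal_lt_top WW_fin

theorem fKK_int (c0 t : ℝ) (x : G) (ht : 0 < t) (hx : 0 < x.2.2) :
    Integrable (fun y => fSpecial c0 y * KK t x y) ρG := by
  obtain ⟨C, hC, hb⟩ := f_bound c0
  have hk := kap_pos
  refine ((f_int c0).norm.const_mul (kap * ((x.2.2)⁻¹ * Real.exp 1) * t ^ (-(3:ℝ)/2))).mono'
    ((f_meas c0).mul (KK_meas t x)).aestronglyMeasurable (ae_of_all _ fun y => ?_)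
  by_cases hy : y ∈ SS
  · have hyp := SS_pos hy
    have h0 := KK_nonneg t x y ht hx hyp
    have h1 := KK_le t x y ht hx hyp
    rw [norm_mul, mul_comm]
    gcongr
    rw [Real.norm_of_nonneg h0]
    refine h1.trans ?_
    have hbi : (y.2.2)⁻¹ ≤ Real.exp 1 := by
      rw [inv_le_comm₀ hyp (by positivity), ← Real.exp_neg]; exact hy.2.1
    have he : Real.exp (-(rr x y ^ 2) / (4 * t)) ≤ 1 := by
      rw [Real.exp_le_one_iff]
      exact div_nonpos_of_nonpos_of_nonneg (by nlinarith [sq_nonneg (rr x y)]) (by positivity)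
    rw [mul_inv]
    calc _ ≤ kap * ((x.2.2)⁻¹ * Real.exp 1) * t ^ (-(3:ℝ)/2) * 1 := by gcongr
      _ = _ := by ring
  · rw [(hb y).2 hy]; simp

open Classical in
theorem max_bound (c0 : ℝ) (h0 : (∫ x, fSpecial c0 x ∂ρG) = 0) : ∃ K1 K2 : ℝ, ∀ x : G, 0 < x.2.2 →
    maxHeat (fSpecial c0) x ≤ ENNReal.ofReal K1 * Dloc x + ENNReal.ofReal K2 * BB x := by
  obtain ⟨C, hC, hb⟩ := f_bound c0
  obtain ⟨C1, hC1, H1⟩ := loc_bound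
  obtain ⟨C2, hC2, H2⟩ := key_bound
  refine ⟨C * C1, C * C2, fun x hx => ?_⟩
  have h1 := ww_meas
  have h2 := UE_meas
  have h3 := WW_meas
  have h4 := UEzz_meas
  unfold maxHeat
  refine iSup₂_le fun t ht => ?_
  have e : convHeat (fSpecial c0) t x = ∫ y, fSpecial c0 y * (KK t x y - Knl t x gE) ∂ρG := by
    rw [conv_eq _ (f_meas c0) t x hx]
    simp_rw [mul_sub]
    rw [integral_sub (fKK_int c0 t x ht hx) ((f_int c0).mul_const _), integral_mul_const, h0]
    simp
  rw [e, ← Real.enorm_eq_ofReal_abs]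
  refine (enorm_integral_le_lintegral_enorm _).trans ?_
  have hm : Measurable (fun y => WW y * (ww x.2.2 * UE (zz x gE) + ww x.2.2 * UE (zz x y))) := by
    have : Measurable (fun y : G => UE (zz x y)) := by unfold zz; fun_prop
    fun_prop
  calc _ ≤ ∫⁻ y, (ENNReal.ofReal C * (if y ∈ SS ∧ Loc x y then ENNReal.ofReal (Lam y.1 * KK t x y) else 0) +
        ENNReal.ofReal (C * C2) * (WW y * (ww x.2.2 * UE (zz x gE) + ww x.2.2 * UE (zz x y)))) ∂ρG := by
        refine lintegral_mono fun y => ?_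
        by_cases hy : y ∈ SS
        swap
        · rw [(hb y).2 hy]; simp
        have hL := Lam_nonneg y.1
        have hK0 := KK_nonneg t x y ht hx (SS_pos hy)
        have hw : 0 ≤ w1 x.2.2 ^ (-(9/8) : ℝ) := Real.rpow_nonneg (by have := w1_ge x.2.2; linarith) _
        have hg : 0 ≤ Lg y.1 ^ (1/4 : ℝ) := Real.rpow_nonneg (by have := Lg_ge y.1; linarith) _
        have hu1 := UU_nonneg (zz x gE)
        have hu2 := UU_nonneg (zz x y)
        have hif : (if y ∈ SS ∧ Loc x y then ENNReal.ofReal (Lam y.1 * KK t x y) else 0) =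
            ENNReal.ofReal (Lam y.1 * (KK t x y - Knl t x y)) := by
          unfold Knl
          by_cases hl : Loc x y <;> simp [hy, hl]
        have hKd : 0 ≤ KK t x y - Knl t x y := by
          unfold Knl
          by_cases hl : Loc x y <;> simp [hl, hK0]
        rw [hif, WW_SS y hy, ww, UE, UE, Real.enorm_eq_ofReal_abs, ← ENNReal.ofReal_mul hC,
          ← ENNReal.ofReal_mul hw, ← ENNReal.ofReal_mul hw, ← ENNReal.ofReal_add (by positivity) (by positivity),
          ← ENNReal.ofReal_mul (by positivity), ← ENNReal.ofReal_mul (by positivity),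
          ← ENNReal.ofReal_add (by positivity) (by positivity)]
        refine ENNReal.ofReal_le_ofReal ?_
        rw [abs_mul]
        have k1 := (hb y).1 hy
        have k2 := H2 t x y ht hx hy
        have k3 : |KK t x y - Knl t x gE| ≤ (KK t x y - Knl t x y) + C2 * (Lg y.1^(1/4:ℝ) * w1 x.2.2^(-(9/8):ℝ) * (UU (zz x gE) + UU (zz x y))) := by
          have : KK t x y - Knl t x gE = (KK t x y - Knl t x y) + (Knl t x y - Knl t x gE) := by ring
          rw [this]
          refine (abs_add_le _ _).trans ?_
          rw [abs_of_nonneg hKd]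
          linarith
        calc _ ≤ (C * Lam y.1) * ((KK t x y - Knl t x y) + C2 * (Lg y.1^(1/4:ℝ) * w1 x.2.2^(-(9/8):ℝ) * (UU (zz x gE) + UU (zz x y)))) := by gcongr
          _ = _ := by ring
    _ = ENNReal.ofReal C * (∫⁻ y, (if y ∈ SS ∧ Loc x y then ENNReal.ofReal (Lam y.1 * KK t x y) else 0) ∂ρG) +
        ENNReal.ofReal (C * C2) * BB x := by
        rw [lintegral_add_right _ (by fun_prop), lintegral_const_mul' _ _ ENNReal.ofReal_ne_top,
          lintegral_const_mul' _ _ ENNReal.ofReal_ne_top, BB]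
    _ ≤ _ := by
        rw [ENNReal.ofReal_mul (q := C1) hC, mul_assoc]
        gcongr
        exact H1 t x ht hx

theorem Dloc_meas : Measurable Dloc := by
  have i1 := ind_meas (-2) 2
  have i2 := ind_meas (Real.exp (-2)) (Real.exp 2)
  have := Lam_meas
  unfold Dloc
  fun_prop

theorem maxHeat_fSpecial_L1 :
    ∀ c0 : ℝ, (∫ x, fSpecial c0 x ∂ρG) = 0 →
      (∫⁻ x, maxHeat (fSpecial c0) x ∂ρG) < ⊤ := by
  intro c0 h0
  obtain ⟨K1, K2, H⟩ := max_bound c0 h0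
  refine lt_of_le_of_lt (lintegral_mono_ae (ae_pos.mono fun x hx => H x hx)) ?_
  rw [lintegral_add_left (Dloc_meas.const_mul _), lintegral_const_mul' _ _ ENNReal.ofReal_ne_top,
    lintegral_const_mul' _ _ ENNReal.ofReal_ne_top]
  exact ENNReal.add_lt_top.2 ⟨ENNReal.mul_lt_top ENNReal.ofReal_lt_top Dloc_fin,
    ENNReal.mul_lt_top ENNReal.ofReal_lt_top BB_fin⟩
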